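/- arXiv:1910.11891 — 2 statements merged into one kernel-verified Lean document; each statement's English description precedes it below -/
import Mathlib

section
/- Every simple graph of order 12 with minimum degree at least 6 and exactly 38 edges contains a K_6 minor. -/
attribute [local instance] Classical.propDecidable

/-- `G` contains a `K_t` minor: `t` pairwise disjoint nonempty branch sets, each inducing a
connected subgraph of `G`, with an edge of `G` between any two of them. -/
def SimpleGraph.HasCompleteMinor {V : Type*} (G : SimpleGraph V) (t : ℕ) : Prop :=
  ∃ B : Fin t → Set V,
    (∀ i, (B i).Nonempty) ∧
    (∀ i, (G.induce (B i)).Connected) ∧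
    (∀ i j, i ≠ j → Disjoint (B i) (B j)) ∧
    (∀ i j, i ≠ j → ∃ u ∈ B i, ∃ v ∈ B j, G.Adj u v)

/-!
Suppose that `G` is a counterexample. An edge in at most two triangles could be contracted to leave
11 vertices and at least 35 edges, which force a `K₆` minor by a theorem of Mader; so every edge is
in at least three triangles. If `v` has degree 6, its five non-neighbours miss at least two of the
ten possible edges among them: otherwise they are a `K₅` up to one edge, and `v` together with its
neighbours completes the minor, unless the numbers of edges are too small for a graph of size 38.

Counting edges around the vertices of degree 6 then leaves only the degree sequence `7⁴ 6⁸`. Every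
vertex `y` of degree 6 is adjacent to exactly three vertices of degree 7, its neighbourhood is
cubic, and the four vertices of degree 7 span exactly two edges. For `x` of degree 7 and `y` of
degree 6 not adjacent to it, the neighbourhood of `y` contains the other three vertices of degree
7. Whether the two edges form a path or a matching, for a suitable `x` this neighbourhood is so
short of triangles that some edge is in fewer than three of them.
-/

open Finset

namespace CompleteMinor

/-! ### Minors -/

section Minors

variable {U V W : Type*} {F : SimpleGraph U} {G : SimpleGraph V} {H : SimpleGraph W}

/-- The vertex sets `S` and `T` are joined by an edge of `G`. -/
def Touches (G : SimpleGraph V) (S T : Set V) : Prop :=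
  ∃ u ∈ S, ∃ v ∈ T, G.Adj u v

lemma Touches.symm {S T : Set V} (h : Touches G S T) : Touches G T S :=
  let ⟨u, hu, v, hv, huv⟩ := h
  ⟨v, hv, u, hu, huv.symm⟩

lemma Touches.mono_right {S T T' : Set V} (h : Touches G S T) (hT : T ⊆ T') : Touches G S T' :=
  let ⟨u, hu, v, hv, huv⟩ := h
  ⟨u, hu, v, hT hv, huv⟩

/-- `H` is a minor of `G`, presented by branch sets: disjoint connected vertex sets of `G` indexed
by the vertices of `H`, such that adjacent vertices of `H` have touching branch sets. -/
def IsMinor (H : SimpleGraph W) (G : SimpleGraph V) : Prop :=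
  ∃ B : W → Set V, (∀ a, (G.induce (B a)).Connected) ∧ Pairwise (Function.onFun Disjoint B) ∧
    ∀ a b, H.Adj a b → Touches G (B a) (B b)

lemma hasCompleteMinor_iff_isMinor {t : ℕ} :
    G.HasCompleteMinor t ↔ IsMinor (⊤ : SimpleGraph (Fin t)) G := by
  constructor
  · rintro ⟨B, -, hconn, hdisj, hadj⟩
    exact ⟨B, hconn, fun i j => hdisj i j, fun i j h => hadj i j h⟩
  · rintro ⟨B, hconn, hdisj, hadj⟩
    exact ⟨B, fun i => Set.nonempty_coe_sort.1 (hconn i).nonempty, hconn, fun i j h => hdisj h,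
      fun i j h => hadj i j h⟩

lemma reachable_induce_iUnion {C : V → Set U} {S : Set V}
    (hC : ∀ v, (F.induce (C v)).Connected) (hadj : ∀ u v, G.Adj u v → Touches F (C u) (C v))
    {v w : S} (p : (G.induce S).Walk v w) {x y : U} (hx : x ∈ C v) (hy : y ∈ C w) :
    (F.induce (⋃ v ∈ S, C v)).Reachable ⟨x, Set.mem_biUnion v.2 hx⟩
      ⟨y, Set.mem_biUnion w.2 hy⟩ := by
  have within (v : S) {x y : U} (hx : x ∈ C v) (hy : y ∈ C v) :
      (F.induce (⋃ v ∈ S, C v)).Reachable ⟨x, Set.mem_biUnion v.2 hx⟩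
        ⟨y, Set.mem_biUnion v.2 hy⟩ :=
    ((hC v).preconnected ⟨x, hx⟩ ⟨y, hy⟩).map
      (SimpleGraph.induceHomOfLE F (Set.subset_biUnion_of_mem v.2)).toHom
  induction p generalizing x with
  | nil => exact within _ hx hy
  | @cons v v' w h _ ih =>
    obtain ⟨x', hx', y', hy', hxy⟩ := hadj v v' h
    have step : (F.induce (⋃ v ∈ S, C v)).Adj ⟨x', Set.mem_biUnion v.2 hx'⟩
      ⟨y', Set.mem_biUnion v'.2 hy'⟩ := hxy
    exact ((within v hx hx').trans step.reachable).trans (ih hy' hy)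

lemma connected_induce_iUnion {C : V → Set U} {S : Set V}
    (hC : ∀ v, (F.induce (C v)).Connected) (hadj : ∀ u v, G.Adj u v → Touches F (C u) (C v))
    (hS : (G.induce S).Connected) : (F.induce (⋃ v ∈ S, C v)).Connected := by
  obtain ⟨v⟩ := hS.nonempty
  obtain ⟨x⟩ := (hC v).nonempty
  refine { preconnected := ?_, nonempty := ⟨⟨x, Set.mem_biUnion v.2 x.2⟩⟩ }
  rintro ⟨x, hx⟩ ⟨y, hy⟩
  obtain ⟨v, hv, hxv⟩ := Set.mem_iUnion₂.1 hx
  obtain ⟨w, hw, hyw⟩ := Set.mem_iUnion₂.1 hy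
  obtain ⟨p⟩ := hS.preconnected ⟨v, hv⟩ ⟨w, hw⟩
  exact reachable_induce_iUnion hC hadj p hxv hyw

theorem IsMinor.trans (hHG : IsMinor H G) (hGF : IsMinor G F) : IsMinor H F := by
  obtain ⟨B, hB, hBdisj, hBadj⟩ := hHG
  obtain ⟨C, hC, hCdisj, hCadj⟩ := hGF
  refine ⟨fun a => ⋃ v ∈ B a, C v, fun a => connected_induce_iUnion hC hCadj (hB a), ?_, ?_⟩
  · intro a b hab
    simp only [Function.onFun, Set.disjoint_iUnion_left, Set.disjoint_iUnion_right]
    exact fun u hu v hv => hCdisj ((hBdisj hab).ne_of_mem hv hu)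
  · intro a b hab
    obtain ⟨u, hu, v, hv, huv⟩ := hBadj a b hab
    obtain ⟨x, hx, y, hy, hxy⟩ := hCadj u v huv
    exact ⟨x, Set.mem_biUnion hu hx, y, Set.mem_biUnion hv hy, hxy⟩

lemma IsMinor.of_isContained (h : H.IsContained G) : IsMinor H G := by
  obtain ⟨f⟩ := h
  refine ⟨fun a => {f a}, fun a => by simp, fun a b hab => ?_, fun a b hab => ?_⟩
  · simpa [Function.onFun] using f.injective.ne hab
  · exact ⟨f a, rfl, f b, rfl, f.toHom.map_adj hab⟩

theorem hasCompleteMinor_of_isMinor {t : ℕ} (h : H.HasCompleteMinor t) (hHG : IsMinor H G) :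
    G.HasCompleteMinor t :=
  hasCompleteMinor_iff_isMinor.2 ((hasCompleteMinor_iff_isMinor.1 h).trans hHG)

lemma hasCompleteMinor_of_induce {S : Set V} {t : ℕ} (h : (G.induce S).HasCompleteMinor t) :
    G.HasCompleteMinor t :=
  hasCompleteMinor_of_isMinor h (IsMinor.of_isContained ⟨SimpleGraph.Copy.induce G S⟩)

lemma hasCompleteMinor_of_isMinor_top {ι : Type*} [Fintype ι]
    (h : IsMinor (⊤ : SimpleGraph ι) G) : G.HasCompleteMinor (Fintype.card ι) := by
  refine hasCompleteMinor_iff_isMinor.2 (IsMinor.trans (IsMinor.of_isContained ?_) h)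
  exact ⟨(SimpleGraph.Iso.completeGraph (Fintype.equivFin ι).symm).toCopy⟩

theorem hasCompleteMinor_of_isNClique {t : ℕ} {K : Finset V} (hK : G.IsNClique t K) :
    G.HasCompleteMinor t :=
  hasCompleteMinor_iff_isMinor.2 <| IsMinor.of_isContained <|
    (SimpleGraph.not_cliqueFree_iff_top_isContained t).1 hK.not_cliqueFree

theorem hasCompleteMinor_of_isNClique_of_two_connected {t : ℕ} {K : Finset V}
    {X R : Set V} (hK : G.IsNClique t K) (hX : (G.induce X).Connected) (hR : (G.induce R).Connected)
    (hXK : Disjoint (K : Set V) X) (hRK : Disjoint (K : Set V) R) (hXR : Disjoint X R)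
    (hXadj : ∀ k ∈ K, Touches G {k} X) (hRadj : ∀ k ∈ K, Touches G {k} R)
    (hXRadj : Touches G X R) : G.HasCompleteMinor (t + 2) := by
  rw [← hK.card_eq]
  suffices IsMinor (⊤ : SimpleGraph (Option (Option K))) G by
    simpa using hasCompleteMinor_of_isMinor_top this
  refine ⟨fun | none => X | some none => R | some (some k) => {k.1}, ?_, ?_, ?_⟩
  · rintro (_ | _ | k)
    exacts [hX, hR, by simp]
  · rw [Set.disjoint_left] at hXK hRK
    rintro (_ | _ | k) (_ | _ | l) hkl <;>
      simp only [ne_eq, not_true_eq_false, Option.some.injEq] at hkl <;>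
      simp only [Function.onFun, Set.disjoint_singleton_left, Set.disjoint_singleton_right,
        Set.mem_singleton_iff]
    exacts [hXR, hXK l.2, hXR.symm, hRK l.2, hXK k.2, hRK k.2, fun h => hkl (Subtype.ext h.symm)]
  · rintro (_ | _ | k) (_ | _ | l) hkl <;>
      simp only [SimpleGraph.top_adj, ne_eq, not_true_eq_false, Option.some.injEq] at hkl
    exacts [hXRadj, (hXadj l l.2).symm, hXRadj.symm, (hRadj l l.2).symm, hXadj k k.2,
      hRadj k k.2, ⟨k, rfl, l, rfl, hK.isClique k.2 l.2 fun h => hkl (Subtype.ext h)⟩]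

lemma touches_singleton_of_mem {v w : V} {S : Set V} (hw : w ∈ S) (h : G.Adj v w) :
    Touches G {v} S :=
  ⟨v, rfl, w, hw, h⟩

lemma connected_induce_insert {S : Set V} {v : V} (hS : (G.induce S).Connected)
    (hv : Touches G {v} S) : (G.induce (insert v S)).Connected := by
  obtain ⟨_, rfl, s, hs, hvs⟩ := hv
  simpa only [Set.singleton_union] using SimpleGraph.connected_induce_union
    (s := {_}) SimpleGraph.Preconnected.of_subsingleton hS.preconnected rfl hs hvs

lemma connected_induce_insert_of_forall_adj {v : V} {T : Set V} (h : ∀ a ∈ T, G.Adj v a) :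
    (G.induce (insert v T)).Connected := by
  rw [SimpleGraph.connected_iff_exists_forall_reachable]
  refine ⟨⟨v, Set.mem_insert _ _⟩, ?_⟩
  rintro ⟨w, rfl | hw⟩
  · rfl
  · exact SimpleGraph.Adj.reachable (G := G.induce _) (h w hw)

end Minors

/-! ### Counting edges -/

section Counting

variable {V : Type*} {G : SimpleGraph V}

/-- The number of neighbours of `u` in `S`. Thus `degreeIn G (G.neighborFinset x) y` is the number
of common neighbours of `x` and `y`. -/
noncomputable def degreeIn (G : SimpleGraph V) (S : Finset V) (u : V) : ℕ :=
  #{w ∈ S | G.Adj u w}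

lemma degreeIn_eq_sum (S : Finset V) (u : V) :
    degreeIn G S u = ∑ w ∈ S, if G.Adj u w then 1 else 0 :=
  card_filter _ _

lemma sum_degreeIn_comm (S T : Finset V) :
    ∑ u ∈ S, degreeIn G T u = ∑ w ∈ T, degreeIn G S w := by
  simp only [degreeIn_eq_sum]
  rw [sum_comm]
  simp only [G.adj_comm]

lemma degreeIn_add_card_le {S T : Finset V} {u : V} (hT : T ⊆ S) (h : ∀ w ∈ T, ¬ G.Adj u w) :
    degreeIn G S u + #T ≤ #S := by
  rw [degreeIn, ← card_filter_add_card_filter_not (s := S) fun w => G.Adj u w]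
  exact Nat.add_le_add_left (card_le_card fun w hw => mem_filter.2 ⟨hT hw, h w hw⟩) _

lemma adj_of_card_le_degreeIn {S : Finset V} {u w : V} (h : #S ≤ degreeIn G S u) (hw : w ∈ S) :
    G.Adj u w :=
  filter_card_eq (le_antisymm (card_filter_le _ _) h) w hw

lemma exists_adj_of_degreeIn_pos {S : Finset V} {u : V} (h : 0 < degreeIn G S u) :
    ∃ w ∈ S, G.Adj u w :=
  filter_nonempty_iff.1 (card_pos.1 h)

lemma exists_not_adj_of_degreeIn_lt_card {S : Finset V} {u : V} (h : degreeIn G S u < #S) :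
    ∃ w ∈ S, ¬ G.Adj u w := by
  contrapose! h
  exact card_le_card fun w hw => mem_filter.2 ⟨hw, h w hw⟩

lemma degreeIn_erase_self (S : Finset V) (u : V) : degreeIn G (S.erase u) u = degreeIn G S u := by
  rw [degreeIn, filter_erase, erase_eq_of_notMem (by simp), degreeIn]

lemma degreeIn_lt_card {S : Finset V} {u : V} (hu : u ∈ S) : degreeIn G S u < #S := by
  simpa using degreeIn_add_card_le (G := G) (singleton_subset_iff.2 hu) (by simp)

lemma degreeIn_add_two_le_card {S : Finset V} {u w : V} (hu : u ∈ S) (hw : w ∈ S) (hne : u ≠ w)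
    (h : ¬ G.Adj u w) : degreeIn G S u + 2 ≤ #S := by
  simpa [hne] using degreeIn_add_card_le (G := G) (T := {u, w}) (u := u)
    (by simp [insert_subset_iff, hu, hw]) (by simp [h])

lemma isClique_of_forall_card_le {S : Finset V} (h : ∀ u ∈ S, #S ≤ degreeIn G S u + 1) :
    G.IsClique (S : Set V) := by
  intro u hu w hw hne
  by_contra hadj
  have := degreeIn_add_two_le_card hu hw hne hadj
  have := h u hu
  omega

lemma exists_not_adj_of_not_isClique {S : Finset V} (hS : ¬ G.IsClique (S : Set V)) :
    ∃ c ∈ S, ∃ c' ∈ S, c ≠ c' ∧ ¬ G.Adj c c' := by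
  simpa only [SimpleGraph.IsClique, Set.Pairwise, not_forall, exists_prop, mem_coe] using hS

lemma sum_degreeIn_eq_card_filter (S T : Finset V) :
    ∑ u ∈ S, degreeIn G T u = #{p ∈ S ×ˢ T | G.Adj p.1 p.2} := by
  simp only [degreeIn_eq_sum, card_filter]
  exact (sum_product' _ _ fun u w => if G.Adj u w then 1 else 0).symm

lemma sum_degreeIn_self_add_card_filter_not_adj (S : Finset V) :
    ∑ u ∈ S, degreeIn G S u + #{p ∈ S.offDiag | ¬ G.Adj p.1 p.2} = #S.offDiag := by
  rw [← card_filter_add_card_filter_not (s := S.offDiag) fun p => G.Adj p.1 p.2,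
    sum_degreeIn_eq_card_filter]
  congr 2
  ext ⟨u, w⟩
  simpa only [mem_filter, mem_product, mem_offDiag] using
    ⟨fun h => ⟨⟨h.1.1, h.1.2, h.2.ne⟩, h.2⟩, fun h => ⟨⟨h.1.1, h.1.2.1⟩, h.2⟩⟩

lemma isClique_erase_of_not_adj {S : Finset V} {c c' : V}
    (hsum : #S * #S < ∑ u ∈ S, degreeIn G S u + #S + 4) (hc : c ∈ S) (hc' : c' ∈ S) (hne : c ≠ c')
    (hadj : ¬ G.Adj c c') : G.IsClique (S.erase c : Set V) := by
  intro u hu w hw huw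
  by_contra hnot
  have hu : u ∈ S ∧ u ≠ c := by simpa using hu
  have hw : w ∈ S ∧ w ≠ c := by simpa using hw
  have hcard : #({(c, c'), (c', c), (u, w), (w, u)} : Finset (V × V)) = 4 := by
    refine card_eq_four.2 ⟨_, _, _, _, ?_, ?_, ?_, ?_, ?_, ?_, rfl⟩ <;> grind
  have hsub : ({(c, c'), (c', c), (u, w), (w, u)} : Finset (V × V)) ⊆
      {p ∈ S.offDiag | ¬ G.Adj p.1 p.2} := by
    simp only [insert_subset_iff, singleton_subset_iff, mem_filter, mem_offDiag]
    exact ⟨⟨⟨hc, hc', hne⟩, hadj⟩, ⟨⟨hc', hc, hne.symm⟩, fun h => hadj h.symm⟩,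
      ⟨⟨hu.1, hw.1, huw⟩, hnot⟩, ⟨hw.1, hu.1, huw.symm⟩, fun h => hnot h.symm⟩
  have hle := card_le_card hsub
  have hsplit := sum_degreeIn_self_add_card_filter_not_adj (G := G) S
  rw [offDiag_card] at hsplit
  omega

/-- Any two distinct vertices of `S` are adjacent, except possibly `x` and `y`. -/
structure IsCliqueUpTo (G : SimpleGraph V) (S : Finset V) (x y : V) : Prop where
  left_mem : x ∈ S
  right_mem : y ∈ S
  ne : x ≠ y
  isClique_erase_left : G.IsClique (S.erase x : Set V)
  isClique_erase_right : G.IsClique (S.erase y : Set V)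

lemma exists_isCliqueUpTo {S : Finset V}
    (hsum : #S * #S < ∑ u ∈ S, degreeIn G S u + #S + 4) (hS : 2 ≤ #S) :
    ∃ x y, IsCliqueUpTo G S x y := by
  by_cases hclique : G.IsClique (S : Set V)
  · obtain ⟨x, hx, y, hy, hxy⟩ := one_lt_card.1 hS
    exact ⟨x, y, hx, hy, hxy, hclique.subset (by simp), hclique.subset (by simp)⟩
  · obtain ⟨x, hx, y, hy, hxy, hadj⟩ := exists_not_adj_of_not_isClique hclique
    exact ⟨x, y, hx, hy, hxy, isClique_erase_of_not_adj hsum hx hy hxy hadj,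
      isClique_erase_of_not_adj hsum hy hx hxy.symm fun h => hadj h.symm⟩

lemma IsCliqueUpTo.sum_eq {S : Finset V} {x y : V} (hS : IsCliqueUpTo G S x y) (f : V → ℕ) :
    ∑ u ∈ S, f u = f x + (f y + ∑ u ∈ (S.erase x).erase y, f u) := by
  rw [← add_sum_erase S f hS.left_mem,
    ← add_sum_erase (S.erase x) f (mem_erase.2 ⟨hS.ne.symm, hS.right_mem⟩)]

lemma IsCliqueUpTo.card_erase_erase {S : Finset V} {x y : V} (hS : IsCliqueUpTo G S x y) :
    #((S.erase x).erase y) + 2 = #S := by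
  have h := hS.sum_eq fun _ => 1
  simp only [← card_eq_sum_ones] at h
  omega

lemma sum_degreeIn_self_add_card_le (S : Finset V) :
    ∑ u ∈ S, degreeIn G S u + #S ≤ #S * #S := by
  rw [card_eq_sum_ones, ← sum_add_distrib, ← card_eq_sum_ones, ← smul_eq_mul]
  exact sum_le_card_nsmul _ _ _ fun u hu => degreeIn_lt_card hu

lemma degreeIn_union {P Q : Finset V} (h : Disjoint P Q) (u : V) :
    degreeIn G (P ∪ Q) u = degreeIn G P u + degreeIn G Q u := by
  simp only [degreeIn_eq_sum, sum_union h]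

lemma sum_degreeIn_union_self {P Q : Finset V} (h : Disjoint P Q) :
    ∑ u ∈ P ∪ Q, degreeIn G (P ∪ Q) u =
      ∑ u ∈ P, degreeIn G P u + ∑ u ∈ Q, degreeIn G Q u + 2 * ∑ u ∈ P, degreeIn G Q u := by
  rw [sum_union h]
  simp only [degreeIn_union h, sum_add_distrib]
  rw [sum_degreeIn_comm Q P]
  ring

lemma sum_degreeIn_self_eq_erase {S : Finset V} {x : V} (hx : x ∈ S) :
    ∑ u ∈ S, degreeIn G S u =
      ∑ u ∈ S.erase x, degreeIn G (S.erase x) u + 2 * degreeIn G S x := by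
  have h := sum_degreeIn_union_self (G := G) (disjoint_singleton_left.2 (notMem_erase x S))
  rw [← insert_eq, insert_erase hx, sum_singleton, sum_singleton, degreeIn_erase_self] at h
  rw [h, degreeIn_eq_sum {x}, sum_singleton, if_neg G.irrefl, zero_add]

variable [Fintype V]

lemma degreeIn_univ (u : V) : degreeIn G univ u = G.degree u := by
  rw [degreeIn, ← SimpleGraph.card_neighborFinset_eq_degree, SimpleGraph.neighborFinset_eq_filter]

lemma sum_univ_eq_add_neighborFinset_add_compl (v : V) (f : V → ℕ) :
    ∑ u, f u = f v + ∑ u ∈ G.neighborFinset v, f u + ∑ u ∈ Gᶜ.neighborFinset v, f u := by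
  have hdisj : Disjoint (G.neighborFinset v) (Gᶜ.neighborFinset v) := by
    simp +contextual [disjoint_left]
  have hunion : G.neighborFinset v ∪ Gᶜ.neighborFinset v = univ.erase v := by
    ext u
    by_cases huv : G.Adj v u
    · simp [huv, huv.ne']
    · simp [huv, eq_comm]
  rw [add_assoc, ← sum_union hdisj, hunion, add_sum_erase _ _ (mem_univ v)]

lemma card_compl_neighborFinset_add (v : V) :
    #(Gᶜ.neighborFinset v) + G.degree v + 1 = Fintype.card V := by
  have h := sum_univ_eq_add_neighborFinset_add_compl (G := G) v fun _ => 1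
  simp only [sum_const, smul_eq_mul, mul_one, card_univ,
    SimpleGraph.card_neighborFinset_eq_degree] at h ⊢
  omega

lemma degree_eq_of_adj {v a : V} (h : G.Adj v a) :
    G.degree a = degreeIn G (G.neighborFinset v) a + degreeIn G (Gᶜ.neighborFinset v) a + 1 := by
  rw [← degreeIn_univ, degreeIn_eq_sum, sum_univ_eq_add_neighborFinset_add_compl v,
    ← degreeIn_eq_sum, ← degreeIn_eq_sum, if_pos h.symm]
  ring

lemma degree_eq_of_compl_adj {v b : V} (h : Gᶜ.Adj v b) :
    G.degree b = degreeIn G (G.neighborFinset v) b + degreeIn G (Gᶜ.neighborFinset v) b := by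
  rw [← degreeIn_univ, degreeIn_eq_sum, sum_univ_eq_add_neighborFinset_add_compl v,
    ← degreeIn_eq_sum, ← degreeIn_eq_sum, if_neg (mt SimpleGraph.Adj.symm h.2), zero_add]

lemma two_mul_card_edgeFinset_eq (v : V) :
    2 * #G.edgeFinset = 2 * G.degree v +
      ∑ a ∈ G.neighborFinset v, degreeIn G (G.neighborFinset v) a +
      2 * ∑ b ∈ Gᶜ.neighborFinset v, degreeIn G (G.neighborFinset v) b +
      ∑ b ∈ Gᶜ.neighborFinset v, degreeIn G (Gᶜ.neighborFinset v) b := by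
  rw [← G.sum_degrees_eq_twice_card_edges, sum_univ_eq_add_neighborFinset_add_compl (G := G) v,
    sum_congr rfl fun a ha => degree_eq_of_adj ((G.mem_neighborFinset v a).1 ha),
    sum_congr (s₁ := Gᶜ.neighborFinset v) rfl fun b hb =>
      degree_eq_of_compl_adj ((Gᶜ.mem_neighborFinset v b).1 hb)]
  have hcomm := sum_degreeIn_comm (G := G) (G.neighborFinset v) (Gᶜ.neighborFinset v)
  simp only [sum_add_distrib, sum_const, smul_eq_mul, mul_one,
    SimpleGraph.card_neighborFinset_eq_degree] at hcomm ⊢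
  omega

lemma card_eq_degreeIn_add {S : Finset V} {v : V} (hv : v ∉ S) :
    #S = degreeIn G S v + #{b ∈ Gᶜ.neighborFinset v | b ∈ S} := by
  rw [degreeIn, ← card_filter_add_card_filter_not (s := S) fun w => G.Adj v w]
  congr 2
  ext b
  have hne : b ∈ S → v ≠ b := fun hb h => hv (h ▸ hb)
  simp only [mem_filter, SimpleGraph.mem_neighborFinset, SimpleGraph.compl_adj]
  tauto

end Counting

/-! ### Edge contraction -/

section Contraction

variable {V : Type*} {G : SimpleGraph V}

/-- The graph obtained from `G` by contracting the edge `xy` into `x`. The vertex set is kept, and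
`y` becomes isolated. -/
def contractEdge (G : SimpleGraph V) (x y : V) : SimpleGraph V :=
  G.deleteIncidenceSet y ⊔ SimpleGraph.fromEdgeSet ((fun w => s(x, w)) '' G.neighborSet y)

lemma contractEdge_adj {x y u w : V} :
    (contractEdge G x y).Adj u w ↔ G.Adj u w ∧ u ≠ y ∧ w ≠ y ∨
      u ≠ w ∧ (u = x ∧ G.Adj y w ∨ w = x ∧ G.Adj y u) := by
  simp only [contractEdge, SimpleGraph.sup_adj, SimpleGraph.deleteIncidenceSet_adj,
    SimpleGraph.fromEdgeSet_adj, Set.mem_image, SimpleGraph.mem_neighborSet, Sym2.eq_iff]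
  grind

lemma isMinor_induce_contractEdge {x y : V} (hxy : G.Adj x y) :
    IsMinor ((contractEdge G x y).induce {y}ᶜ) G := by
  let B : ↥({y}ᶜ : Set V) → Set V := fun u => if u = x then {x, y} else {u.1}
  have mem_B (u : ↥({y}ᶜ : Set V)) (z : V) : z ∈ B u ↔ z = u ∨ z = y ∧ u = x := by
    by_cases hu : (u : V) = x <;> simp [B, hu]
  refine ⟨B, fun u => ?_, fun u w huw => ?_, fun u w huw => ?_⟩
  · by_cases hu : (u : V) = x
    · rw [show B u = {x, y} from if_pos hu]
      exact SimpleGraph.induce_pair_connected_of_adj hxy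
    · rw [show B u = {u.1} from if_neg hu]
      simp
  · have hu : (u : V) ≠ y := u.2
    have hw : (w : V) ≠ y := w.2
    have hne : (u : V) ≠ w := fun h => huw (Subtype.ext h)
    refine Set.disjoint_left.2 fun z hzu hzw => ?_
    grind
  · rcases contractEdge_adj.1 huw with ⟨h, -⟩ | ⟨-, ⟨hu, h⟩ | ⟨hw, h⟩⟩
    · exact ⟨u, (mem_B u u).2 (.inl rfl), w, (mem_B w w).2 (.inl rfl), h⟩
    · exact ⟨y, (mem_B u y).2 (.inr ⟨rfl, hu⟩), w, (mem_B w w).2 (.inl rfl), h⟩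
    · exact ⟨u, (mem_B u u).2 (.inl rfl), y, (mem_B w y).2 (.inr ⟨rfl, hw⟩), h.symm⟩

variable [Fintype V]

lemma card_edgeFinset_induce_contractEdge {x y : V} (hxy : G.Adj x y) :
    #((contractEdge G x y).induce {y}ᶜ).edgeFinset = #(contractEdge G x y).edgeFinset := by
  apply SimpleGraph.card_edgeFinset_induce_of_support_subset
  rintro u ⟨w, h⟩ rfl
  rcases contractEdge_adj.1 h with ⟨-, h, -⟩ | ⟨-, ⟨rfl, -⟩ | ⟨-, h⟩⟩
  exacts [h rfl, hxy.ne rfl, G.irrefl h]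

-- Contracting `xy` loses the edge `xy` and one edge for each common neighbour of `x` and `y`.
lemma card_edgeFinset_le_contractEdge {x y : V} (hxy : G.Adj x y) :
    #G.edgeFinset ≤ #(contractEdge G x y).edgeFinset + degreeIn G (G.neighborFinset x) y + 1 := by
  set moved := (G.neighborFinset y \ G.neighborFinset x).erase x with hmoved
  have mem_moved {w : V} : w ∈ moved ↔ w ≠ x ∧ G.Adj y w ∧ ¬ G.Adj x w := by simp [hmoved]
  have hsub : (G.deleteIncidenceSet y).edgeFinset ∪ moved.image (fun w => s(x, w)) ⊆
      (contractEdge G x y).edgeFinset := by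
    refine union_subset (SimpleGraph.edgeFinset_mono le_sup_left) (image_subset_iff.2 ?_)
    intro w hw
    have hw := mem_moved.1 hw
    exact SimpleGraph.mem_edgeFinset.2 <| contractEdge_adj.2 <|
      .inr ⟨hw.1.symm, .inl ⟨rfl, hw.2.1⟩⟩
  have hdisj : Disjoint (G.deleteIncidenceSet y).edgeFinset (moved.image fun w => s(x, w)) := by
    refine disjoint_right.2 (forall_mem_image.2 fun w hw h => (mem_moved.1 hw).2.2 ?_)
    exact G.deleteIncidenceSet_le y (SimpleGraph.mem_edgeFinset.1 h)
  have hle := card_le_card hsub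
  rw [card_union_of_disjoint hdisj, G.card_edgeFinset_deleteIncidenceSet,
    card_image_of_injective _ fun a b h => by grind] at hle
  have hcard : #moved + 1 = #(G.neighborFinset y \ G.neighborFinset x) :=
    card_erase_add_one (by simp [hxy.symm])
  have hcodeg : degreeIn G (G.neighborFinset x) y = #(G.neighborFinset y ∩ G.neighborFinset x) := by
    rw [degreeIn, inter_comm, ← filter_mem_eq_inter]
    simp only [SimpleGraph.mem_neighborFinset]
  have hsplit := card_sdiff_add_card_inter (G.neighborFinset y) (G.neighborFinset x)
  rw [SimpleGraph.card_neighborFinset_eq_degree] at hsplit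
  omega

end Contraction

/-! ### The theorem of Mader for `K₆` in small orders -/

section Mader

variable {V : Type*} {G : SimpleGraph V}

/-- No vertex of `N` has two non-neighbours in `N`. -/
def AlmostClique (G : SimpleGraph V) (N : Finset V) : Prop :=
  ∀ a ∈ N, ∀ b ∈ N, ∀ c ∈ N, a ≠ b → a ≠ c → b ≠ c → G.Adj a b ∨ G.Adj a c

lemma almostClique_of_forall_card_le {N : Finset V} (h : ∀ a ∈ N, #N ≤ degreeIn G N a + 2) :
    AlmostClique G N := by
  intro a ha b hb c hc hab hac hbc
  by_contra! hadj
  have hle := degreeIn_add_card_le (G := G) (S := N) (T := {a, b, c}) (u := a)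
    (by simp [insert_subset_iff, ha, hb, hc]) (by simp [hadj])
  have := h a ha
  rw [card_eq_three.2 ⟨a, b, c, hab, hac, hbc, rfl⟩] at hle
  omega

lemma AlmostClique.hasCompleteMinor_of_isClique {N Q : Finset V} {v : V} (hN : AlmostClique G N)
    (hv : ∀ a ∈ N, G.Adj v a) (hQN : Q ⊆ N) (hcard : #N = #Q + 2)
    (hQ : G.IsClique (Q : Set V)) : G.HasCompleteMinor (#Q + 2) := by
  have hvQ : v ∉ Q := fun h => G.irrefl (hv v (hQN h))
  obtain ⟨e, f, hef, hNQ⟩ : ∃ e f, e ≠ f ∧ N \ Q = {e, f} := card_eq_two.1 <| by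
    rw [card_sdiff_of_subset hQN]
    omega
  obtain ⟨heN, heQ⟩ : e ∈ N ∧ e ∉ Q := mem_sdiff.1 (by simp [hNQ])
  obtain ⟨hfN, hfQ⟩ : f ∈ N ∧ f ∉ Q := mem_sdiff.1 (by simp [hNQ])
  have hQe {q : V} (hq : q ∈ Q) : q ≠ e := fun h => heQ (h ▸ hq)
  have hQf {q : V} (hq : q ∈ Q) : q ≠ f := fun h => hfQ (h ▸ hq)
  by_cases hadj : G.Adj e f
  · refine hasCompleteMinor_of_isNClique_of_two_connected (X := {v}) (R := {e, f}) ⟨hQ, rfl⟩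
      (by simp) (SimpleGraph.induce_pair_connected_of_adj hadj) (by simpa using hvQ)
      (by simp [heQ, hfQ]) (by simp [(hv e heN).ne, (hv f hfN).ne])
      (fun q hq => touches_singleton_of_mem rfl (hv q (hQN hq)).symm) (fun q hq => ?_)
      (touches_singleton_of_mem (by simp) (hv e heN))
    rcases hN q (hQN hq) e heN f hfN (hQe hq) (hQf hq) hef with h | h
    exacts [touches_singleton_of_mem (by simp) h, touches_singleton_of_mem (by simp) h]
  · have hvQclique : G.IsNClique (#Q + 1) (insert v Q) :=
      SimpleGraph.IsNClique.insert ⟨hQ, rfl⟩ fun q hq => hv q (hQN hq)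
    refine hasCompleteMinor_of_isNClique (hvQclique.insert (a := e) fun q hq => ?_)
    rcases mem_insert.1 hq with rfl | hq
    · exact (hv e heN).symm
    · exact (hN e heN q (hQN hq) f hfN (hQe hq).symm hef (hQf hq)).resolve_right hadj

lemma AlmostClique.exists_two_disjoint_edges {Q : Finset V} (hQ : AlmostClique G Q)
    (hcard : #Q = 4) : ∃ r s p q, Q = {r, s, p, q} ∧ Disjoint ({r, s} : Finset V) {p, q} ∧
      G.Adj r s ∧ G.Adj p q := by
  obtain ⟨a, b, c, d, hab, hac, had, hbc, hbd, hcd, rfl⟩ := card_eq_four.1 hcard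
  by_cases hadj : G.Adj a b ∧ G.Adj c d
  · refine ⟨a, b, c, d, rfl, ?_, hadj⟩
    rw [disjoint_left]
    grind
  have hac_bd : G.Adj a c ∧ G.Adj b d := by
    have := hQ a (by simp) b (by simp) c (by simp) hab hac hbc
    have := hQ b (by simp) a (by simp) d (by simp) hab.symm hbd had
    have := hQ c (by simp) d (by simp) a (by simp) hcd hac.symm had.symm
    have := hQ d (by simp) c (by simp) b (by simp) hcd.symm hbd.symm hbc.symm
    grind [SimpleGraph.adj_comm]
  refine ⟨a, c, b, d, by grind, ?_, hac_bd⟩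
  rw [disjoint_left]
  grind

lemma AlmostClique.mono {N Q : Finset V} (hN : AlmostClique G N) (hQ : Q ⊆ N) :
    AlmostClique G Q :=
  fun a ha b hb c hc => hN a (hQ ha) b (hQ hb) c (hQ hc)

lemma AlmostClique.hasCompleteMinor_of_connected {N : Finset V} {v c c' : V} {D : Set V}
    (hN : AlmostClique G N) (hv : ∀ a ∈ N, G.Adj v a) (hcard : #N = 6) (hc : c ∈ N) (hc' : c' ∈ N)
    (hcc' : c ≠ c') (hadj : ¬ G.Adj c c') (hD : (G.induce D).Connected) (hvD : v ∉ D)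
    (hND : Disjoint (N : Set V) D) (hcD : Touches G {c} D) (hc'D : Touches G {c'} D) :
    G.HasCompleteMinor 6 := by
  have hQN : (N.erase c).erase c' ⊆ N := (erase_subset _ _).trans (erase_subset _ _)
  obtain ⟨r, s, p, q, hQ, hdisj, hrs, hpq⟩ := (hN.mono hQN).exists_two_disjoint_edges (by
    rw [card_erase_of_mem (by grind), card_erase_of_mem hc]; omega)
  have mem_Q {z : V} (hz : z ∈ ({r, s, p, q} : Finset V)) : z ≠ c' ∧ z ≠ c ∧ z ∈ N := by
    rw [← hQ] at hz; simpa using hz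
  have adj_c {z : V} (hz : z ∈ ({r, s, p, q} : Finset V)) : G.Adj c z := by
    obtain ⟨hzc', hzc, hzN⟩ := mem_Q hz
    exact (hN c hc z hzN c' hc' hzc.symm hcc' hzc').resolve_right hadj
  have adj_c' {z : V} (hz : z ∈ ({r, s, p, q} : Finset V)) : G.Adj c' z := by
    obtain ⟨hzc', hzc, hzN⟩ := mem_Q hz
    exact (hN c' hc' z hzN c hc hzc'.symm hcc'.symm hzc).resolve_right fun h => hadj h.symm
  have hpqK : G.IsNClique 3 {c', p, q} :=
    SimpleGraph.is3Clique_triple_iff.2 ⟨adj_c' (by simp), adj_c' (by simp), hpq⟩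
  have hK : G.IsNClique 4 {v, c', p, q} := hpqK.insert fun z hz => hv z (by grind)
  have hvN : v ∉ N := fun h => G.irrefl (hv v h)
  have hND {z : V} (hz : z ∈ N) : z ∉ D := Set.disjoint_left.1 hND hz
  refine hasCompleteMinor_of_isNClique_of_two_connected (X := {r, s}) (R := insert c D) hK
    (SimpleGraph.induce_pair_connected_of_adj hrs) (connected_induce_insert hD hcD)
    (by rw [Set.disjoint_left]; grind) (by rw [Set.disjoint_left]; grind)
    (by rw [Set.disjoint_left]; grind) (fun k hk => ?_) (fun k hk => ?_)
    ⟨r, .inl rfl, c, .inl rfl, (adj_c (by simp)).symm⟩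
  · have touches_rs (z : V) (hz : z = p ∨ z = q) : Touches G {z} {r, s} :=
      (hN z (by grind) r (by grind) s (by grind) (by grind) (by grind) hrs.ne).elim
        (touches_singleton_of_mem (by simp)) (touches_singleton_of_mem (by simp))
    obtain rfl | rfl | hk : k = v ∨ k = c' ∨ k = p ∨ k = q := by simpa using hk
    · exact touches_singleton_of_mem (.inl rfl) (hv r (by grind))
    · exact touches_singleton_of_mem (.inl rfl) (adj_c' (by simp))
    · exact touches_rs k hk
  · obtain rfl | rfl | hk : k = v ∨ k = c' ∨ k = p ∨ k = q := by simpa using hk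
    · exact touches_singleton_of_mem (.inl rfl) (hv c hc)
    · exact hc'D.mono_right (Set.subset_insert c D)
    · exact touches_singleton_of_mem (.inl rfl) (adj_c (by grind)).symm

lemma AlmostClique.hasCompleteMinor_of_four_le_degreeIn {N : Finset V} {v u : V}
    (hN : AlmostClique G N) (hv : ∀ a ∈ N, G.Adj v a) (hcard : #N = 6) (huv : u ≠ v) (huN : u ∉ N)
    (hu : 4 ≤ degreeIn G N u) : G.HasCompleteMinor 6 := by
  obtain ⟨Q, hQ, hQcard⟩ := exists_subset_card_eq hu
  have hQN (q : V) (hq : q ∈ Q) : q ∈ N ∧ G.Adj u q := mem_filter.1 (hQ hq)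
  by_cases hclique : G.IsClique (Q : Set V)
  · simpa only [hQcard] using hN.hasCompleteMinor_of_isClique hv (fun q hq => (hQN q hq).1)
      (by omega) hclique
  · obtain ⟨c, hc, c', hc', hne, hadj⟩ := exists_not_adj_of_not_isClique hclique
    exact hN.hasCompleteMinor_of_connected hv hcard (hQN c hc).1 (hQN c' hc').1 hne hadj (D := {u})
      (by simp) huv.symm (by simpa using huN) (touches_singleton_of_mem rfl (hQN c hc).2.symm)
      (touches_singleton_of_mem rfl (hQN c' hc').2.symm)

lemma connected_induce_of_isClique {S : Set V} (hne : S.Nonempty) (hS : G.IsClique S) :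
    (G.induce S).Connected := by
  have := hne.to_subtype
  rw [SimpleGraph.induce_eq_top.2 hS]
  exact SimpleGraph.connected_top

variable [Fintype V]

lemma hasCompleteMinor_six_of_degree_eq_six {v : V} (hcard : Fintype.card V ≤ 11)
    (hdeg : ∀ u, 6 ≤ G.degree u) (hv : G.degree v = 6)
    (hcodeg : ∀ a, G.Adj v a → 4 ≤ degreeIn G (G.neighborFinset v) a) :
    G.HasCompleteMinor 6 := by
  have hfar := card_compl_neighborFinset_add (G := G) v
  have hNdeg {a : V} (ha : G.Adj v a) := degree_eq_of_adj ha
  have hUdeg {u : V} (hu : Gᶜ.Adj v u) := degree_eq_of_compl_adj hu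
  have hvN (a : V) (ha : a ∈ G.neighborFinset v) : G.Adj v a := (G.mem_neighborFinset v a).1 ha
  have hvU (u : V) (hu : u ∈ Gᶜ.neighborFinset v) : Gᶜ.Adj v u := (Gᶜ.mem_neighborFinset v u).1 hu
  have hNcard : #(G.neighborFinset v) = 6 := hv
  set N := G.neighborFinset v
  set U := Gᶜ.neighborFinset v
  have hN : AlmostClique G N := almostClique_of_forall_card_le fun a ha => by
    have := hcodeg a (hvN a ha)
    omega
  by_cases hu : ∃ u ∈ U, 4 ≤ degreeIn G N u
  · obtain ⟨u, huU, hu⟩ := hu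
    exact hN.hasCompleteMinor_of_four_le_degreeIn hvN hNcard (hvU u huU).ne'
      (fun h => (hvU u huU).2 (hvN u h)) hu
  push Not at hu
  by_cases hNclique : G.IsClique (N : Set V)
  · obtain ⟨Q, hQN, hQ⟩ := exists_subset_card_eq (show 4 ≤ #N by omega)
    simpa only [hQ] using
      hN.hasCompleteMinor_of_isClique hvN hQN (by omega) (hNclique.subset hQN)
  have hUclique : G.IsClique (U : Set V) := isClique_of_forall_card_le fun u hu' => by
    have := hu u hu'
    have := hdeg u
    have := hUdeg (hvU u hu')
    omega
  have exists_adj {c c' : V} (hc : c ∈ N) (hc' : c' ∈ N) (hne : c ≠ c') (hadj : ¬ G.Adj c c') :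
      Touches G {c} U := by
    have := degreeIn_add_two_le_card hc hc' hne hadj
    have := hdeg c
    have := hNdeg (hvN c hc)
    obtain ⟨u, hu, h⟩ := exists_adj_of_degreeIn_pos (G := G) (S := U) (u := c) (by omega)
    exact touches_singleton_of_mem hu h
  obtain ⟨c, hc, c', hc', hne, hadj⟩ := exists_not_adj_of_not_isClique hNclique
  have hcU := exists_adj hc hc' hne hadj
  exact hN.hasCompleteMinor_of_connected hvN hNcard hc hc' hne hadj
    (connected_induce_of_isClique (let ⟨_, _, u, hu, _⟩ := hcU; ⟨u, hu⟩) hUclique)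
    (fun h => (hvU v h).ne rfl) (Set.disjoint_left.2 fun a ha hu => (hvU a hu).2 (hvN a ha))
    hcU (exists_adj hc' hc hne.symm fun h => hadj h.symm)

lemma exists_le_card_edgeFinset_eq {k : ℕ} (hk : k ≤ #G.edgeFinset) :
    ∃ H ≤ G, #H.edgeFinset = k := by
  obtain ⟨T, hT, hTcard⟩ := exists_subset_card_eq (Nat.sub_le #G.edgeFinset k)
  refine ⟨G.deleteEdges T, G.deleteEdges_le _, ?_⟩
  rw [SimpleGraph.edgeFinset_deleteEdges, card_sdiff_of_subset hT, hTcard]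
  omega

lemma card_edgeFinset_le_induce_compl_singleton_add_degree (v : V) :
    #G.edgeFinset ≤ #(G.induce {v}ᶜ).edgeFinset + G.degree v := by
  rw [SimpleGraph.card_edgeFinset_induce_compl_singleton,
    SimpleGraph.card_edgeFinset_deleteIncidenceSet]
  omega

lemma hasCompleteMinor_six_of_degree_eq_five {v : V} (hv : G.degree v = 5)
    (hcodeg : ∀ a, G.Adj v a → 4 ≤ degreeIn G (G.neighborFinset v) a) :
    G.HasCompleteMinor 6 := by
  have hclique : G.IsNClique 5 (G.neighborFinset v) := by
    refine ⟨isClique_of_forall_card_le fun a ha => ?_, hv⟩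
    have := hcodeg a ((G.mem_neighborFinset v a).1 ha)
    rw [SimpleGraph.card_neighborFinset_eq_degree]
    omega
  exact hasCompleteMinor_of_isNClique
    (hclique.insert fun a ha => (G.mem_neighborFinset v a).1 ha)

lemma hasCompleteMinor_six_of_forall_four_le_degreeIn (hcard : Fintype.card V ≤ 11)
    (hsize : 2 * #G.edgeFinset < 7 * Fintype.card V) (hdeg : ∀ v, 5 ≤ G.degree v)
    (hcodeg : ∀ x y, G.Adj x y → 4 ≤ degreeIn G (G.neighborFinset x) y) :
    G.HasCompleteMinor 6 := by
  by_cases hfive : ∃ v, G.degree v = 5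
  · obtain ⟨v, hv⟩ := hfive
    exact hasCompleteMinor_six_of_degree_eq_five hv (hcodeg v)
  push Not at hfive
  have hsix (v : V) : 6 ≤ G.degree v := (hdeg v).lt_of_ne (hfive v).symm
  obtain ⟨v, -, hv⟩ : ∃ v ∈ univ, G.degree v < 7 := by
    refine exists_lt_of_sum_lt ?_
    rw [G.sum_degrees_eq_twice_card_edges, sum_const, card_univ, smul_eq_mul]
    omega
  exact hasCompleteMinor_six_of_degree_eq_six hcard hsix (by have := hsix v; omega) (hcodeg v)

theorem hasCompleteMinor_six_of_card_le_eleven {n : ℕ} (hn : 5 ≤ n) :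
    ∀ {V : Type*} [Fintype V] {G : SimpleGraph V}, Fintype.card V = n → n ≤ 11 →
      4 * n ≤ #G.edgeFinset + 9 → G.HasCompleteMinor 6 := by
  induction n, hn using Nat.le_induction with
  | base =>
    intro V _ G hcard _ hsize
    have hchoose := G.card_edgeFinset_le_card_choose_two
    rw [hcard, show Nat.choose 5 2 = 10 from rfl] at hchoose
    omega
  | succ n hn ih =>
    intro V _ G' hcard hn11 hsize'
    obtain ⟨G, hle, hsize⟩ :=
      exists_le_card_edgeFinset_eq (G := G') (k := 4 * (n + 1) - 9) (by omega)
    refine hasCompleteMinor_of_isMinor (H := G) ?_ (IsMinor.of_isContained (.of_le hle))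
    have card_compl (v : V) : Fintype.card ({v}ᶜ : Set V) = n := by
      rw [Fintype.card_compl_set, hcard, Set.card_singleton, Nat.add_sub_cancel]
    by_cases hdeg : ∃ v, G.degree v ≤ 4
    · obtain ⟨v, hv⟩ := hdeg
      have hdel : 4 * n ≤ #(G.induce {v}ᶜ).edgeFinset + 9 := by
        have := card_edgeFinset_le_induce_compl_singleton_add_degree (G := G) v
        omega
      exact hasCompleteMinor_of_induce (ih (card_compl v) (by omega) (by convert hdel))
    by_cases hcodeg : ∃ x y, G.Adj x y ∧ degreeIn G (G.neighborFinset x) y ≤ 3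
    · obtain ⟨x, y, hxy, hcodeg⟩ := hcodeg
      have hcontr : 4 * n ≤ #((contractEdge G x y).induce {y}ᶜ).edgeFinset + 9 := by
        have := card_edgeFinset_le_contractEdge hxy
        rw [card_edgeFinset_induce_contractEdge hxy]
        omega
      exact hasCompleteMinor_of_isMinor (ih (card_compl y) (by omega) (by convert hcontr))
        (isMinor_induce_contractEdge hxy)
    push Not at hdeg hcodeg
    exact hasCompleteMinor_six_of_forall_four_le_degreeIn (by omega) (by omega) hdeg hcodeg

end Mader

/-! ### The non-neighbours of a vertex of degree six -/

section FarSide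

variable {V : Type*} {G : SimpleGraph V} {A B : Finset V} {v x y : V}

-- The branch sets are `X`, `insert v (A \ X)` and the vertices of the clique `B.erase x`.
lemma IsCliqueUpTo.hasCompleteMinor_of_connected {X : Set V} (hB : IsCliqueUpTo G B x y)
    (hvA : ∀ a ∈ A, G.Adj v a) (hvB : v ∉ B) (hAB : Disjoint A B)
    (hX : (G.induce X).Connected) (hxX : x ∈ X) (hXA : X ⊆ insert x A) (hyX : Touches G {y} X)
    (hxA : ∃ a ∈ A, G.Adj x a) (hrest : ∀ b ∈ B, b ≠ x → ∃ a ∈ A, a ∉ X ∧ G.Adj b a) :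
    G.HasCompleteMinor (#B + 1) := by
  have hvA' : v ∉ A := fun h => G.irrefl (hvA v h)
  have hAB {a : V} (ha : a ∈ A) : a ∉ B := disjoint_left.1 hAB ha
  have hX_mem {z : V} (hz : z ∈ X) : z = x ∨ z ∈ A := hXA hz
  have hR : (G.induce (insert v (A \ X : Set V))).Connected :=
    connected_induce_insert_of_forall_adj fun a ha => hvA a ha.1
  have hK : G.IsNClique (#B - 1) (B.erase x) :=
    ⟨hB.isClique_erase_left, card_erase_of_mem hB.left_mem⟩
  have hx := hB.left_mem
  rw [show #B + 1 = #B - 1 + 2 by have := card_pos.2 ⟨x, hx⟩; omega]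
  refine hasCompleteMinor_of_isNClique_of_two_connected hK hX hR
    (by rw [Set.disjoint_left]; grind) (by rw [Set.disjoint_left]; grind)
    (by rw [Set.disjoint_left]; grind) (fun b hb => ?_) (fun b hb => ?_) ?_
  · obtain ⟨hbx, hbB⟩ := mem_erase.1 hb
    by_cases hby : b = y
    · rwa [hby]
    · exact touches_singleton_of_mem hxX
        (hB.isClique_erase_right (by simp [hbB, hby]) (by simp [hx, hB.ne]) hbx)
  · obtain ⟨a, haA, haX, hba⟩ := hrest b (mem_of_mem_erase hb) (ne_of_mem_erase hb)
    exact touches_singleton_of_mem (.inr ⟨haA, haX⟩) hba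
  · obtain ⟨a, haA, hxa⟩ := hxA
    by_cases haX : a ∈ X
    · exact ⟨a, haX, v, .inl rfl, (hvA a haA).symm⟩
    · exact ⟨x, hxX, a, .inr ⟨haA, haX⟩, hxa⟩

lemma exists_adj_notMem_of_card_lt_degreeIn {S T : Finset V} {u : V} (h : #T < degreeIn G S u) :
    ∃ w ∈ S, w ∉ T ∧ G.Adj u w := by
  obtain ⟨w, hw, hwT⟩ := exists_mem_notMem_of_card_lt_card h
  exact ⟨w, (mem_filter.1 hw).1, hwT, (mem_filter.1 hw).2⟩

lemma IsCliqueUpTo.hasCompleteMinor_of_adj (hB : IsCliqueUpTo G B x y)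
    (hvA : ∀ a ∈ A, G.Adj v a) (hvB : v ∉ B) (hAB : Disjoint A B)
    (hBA : ∀ b ∈ B, 1 ≤ degreeIn G A b) (hxy : G.Adj x y) : G.HasCompleteMinor (#B + 1) := by
  have exists_adj (b : V) (hb : b ∈ B) : ∃ a ∈ A, G.Adj b a :=
    exists_adj_of_degreeIn_pos (hBA b hb)
  refine hB.hasCompleteMinor_of_connected (X := {x}) hvA hvB hAB (by simp) rfl (by simp)
    (touches_singleton_of_mem rfl hxy.symm) (exists_adj x hB.left_mem) fun b hb _ => ?_
  obtain ⟨a, ha, hba⟩ := exists_adj b hb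
  exact ⟨a, ha, fun h => disjoint_left.1 hAB ha (h ▸ hB.left_mem), hba⟩

lemma IsCliqueUpTo.hasCompleteMinor_of_common_neighbor {a : V} (hB : IsCliqueUpTo G B x y)
    (hvA : ∀ a ∈ A, G.Adj v a) (hvB : v ∉ B) (hAB : Disjoint A B)
    (hBA : ∀ b ∈ B, 2 ≤ degreeIn G A b) (ha : a ∈ A) (hxa : G.Adj x a) (hya : G.Adj y a) :
    G.HasCompleteMinor (#B + 1) := by
  refine hB.hasCompleteMinor_of_connected (X := {x, a}) hvA hvB hAB
    (SimpleGraph.induce_pair_connected_of_adj hxa) (by simp) (by simp [Set.insert_subset_iff, ha])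
    (touches_singleton_of_mem (by simp) hya) ⟨a, ha, hxa⟩ fun b hb _ => ?_
  obtain ⟨a', ha', hne, hba'⟩ := exists_adj_notMem_of_card_lt_degreeIn (T := {a}) (hBA b hb)
  have := disjoint_left.1 hAB ha'
  have := hB.left_mem
  exact ⟨a', ha', by grind, hba'⟩

lemma IsCliqueUpTo.hasCompleteMinor_of_path {a a' : V} (hB : IsCliqueUpTo G B x y)
    (hvA : ∀ a ∈ A, G.Adj v a) (hvB : v ∉ B) (hAB : Disjoint A B) (ha : a ∈ A) (ha' : a' ∈ A)
    (hxa : G.Adj x a) (haa' : G.Adj a a') (hya' : G.Adj y a')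
    (hBA : ∀ b ∈ B, b ≠ x → ∃ w ∈ A, w ∉ ({a, a'} : Finset V) ∧ G.Adj b w) :
    G.HasCompleteMinor (#B + 1) := by
  refine hB.hasCompleteMinor_of_connected (X := {x, a, a'}) hvA hvB hAB
    (connected_induce_insert (SimpleGraph.induce_pair_connected_of_adj haa')
      (touches_singleton_of_mem (by simp) hxa)) (by simp)
    (by simp [Set.insert_subset_iff, ha, ha']) (touches_singleton_of_mem (by simp) hya')
    ⟨a, ha, hxa⟩ fun b hb hbx => ?_
  obtain ⟨w, hw, hne, hbw⟩ := hBA b hb hbx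
  have := disjoint_left.1 hAB hw
  have := hB.left_mem
  exact ⟨w, hw, by grind, hbw⟩

lemma IsCliqueUpTo.exists_filter_adj_eq_pair {a a' : V} (hB : IsCliqueUpTo G B x y)
    (hvA : ∀ a ∈ A, G.Adj v a) (hvB : v ∉ B) (hAB : Disjoint A B)
    (hBA : ∀ b ∈ B, 2 ≤ degreeIn G A b) (hyA : 3 ≤ degreeIn G A y) (ha : a ∈ A) (ha' : a' ∈ A)
    (hxa : G.Adj x a) (haa' : G.Adj a a') (hya' : G.Adj y a')
    (hminor : ¬ G.HasCompleteMinor (#B + 1)) :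
    ∃ z ∈ (B.erase x).erase y, {w ∈ A | G.Adj z w} = {a, a'} := by
  have hpair : #({a, a'} : Finset V) ≤ 2 := card_le_two
  contrapose! hminor
  refine hB.hasCompleteMinor_of_path hvA hvB hAB ha ha' hxa haa' hya' fun b hb hbx => ?_
  by_cases hby : b = y
  · exact exists_adj_notMem_of_card_lt_degreeIn (by rw [hby]; omega)
  · by_contra! hall
    refine hminor b (by simp [hb, hbx, hby]) (eq_of_subset_of_card_le ?_ (hpair.trans (hBA b hb)))
    exact fun w hw => by_contra fun h => hall w (mem_filter.1 hw).1 h (mem_filter.1 hw).2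

lemma card_le_and_forall_exists_of_forall_exists_eq_pair {P Q Z : Finset V} {E : Finset (V × V)}
    {N : V → Finset V} (hPQ : Disjoint P Q) (hE : E ⊆ P ×ˢ Q)
    (hN : ∀ p ∈ E, ∃ z ∈ Z, N z = {p.1, p.2}) :
    #E ≤ #Z ∧ (#Z ≤ #E → ∀ z ∈ Z, ∃ p ∈ E, N z = {p.1, p.2}) := by
  have hinj : Set.InjOn (fun p : V × V => ({p.1, p.2} : Finset V)) E := by
    rintro ⟨a, a'⟩ hp ⟨b, b'⟩ hq (hpq : ({a, a'} : Finset V) = {b, b'})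
    have hp := mem_product.1 (hE hp)
    have hq := mem_product.1 (hE hq)
    rw [disjoint_left] at hPQ
    have ha : a ∈ ({b, b'} : Finset V) := by rw [← hpq]; simp
    have ha' : a' ∈ ({b, b'} : Finset V) := by rw [← hpq]; simp
    grind
  have hsub : E.image (fun p => {p.1, p.2}) ⊆ Z.image N :=
    image_subset_iff.2 fun p hp => mem_image.2 (hN p hp)
  have hcard : #(E.image fun p => ({p.1, p.2} : Finset V)) = #E := card_image_of_injOn hinj
  have hle : #(Z.image N) ≤ #Z := card_image_le
  refine ⟨hcard ▸ (card_le_card hsub).trans hle, fun hZE z hz => ?_⟩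
  have hz : N z ∈ E.image (fun p => {p.1, p.2}) := by
    rw [eq_of_subset_of_card_le hsub (by omega)]
    exact mem_image_of_mem N hz
  obtain ⟨p, hp, h⟩ := mem_image.1 hz
  exact ⟨p, hp, h.symm⟩

lemma union_eq_and_card_eq_of_card_le {P Q : Finset V} {m n : ℕ} (hP : P ⊆ A) (hQ : Q ⊆ A)
    (hPQ : Disjoint P Q) (hA : #A ≤ m + n) (hm : m ≤ #P) (hn : n ≤ #Q) :
    P ∪ Q = A ∧ #P = m ∧ #Q = n := by
  have hunion : P ∪ Q ⊆ A := union_subset hP hQ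
  have hcard : #(P ∪ Q) = #P + #Q := card_union_of_disjoint hPQ
  have hle := card_le_card hunion
  exact ⟨eq_of_subset_of_card_le hunion (by omega), by omega, by omega⟩

/- If no branch set `X` joins `x` to `y`, then their neighbours in `A` form two triples, and each
edge between the triples is the whole neighbourhood in `A` of one of the three other vertices of
`B`. There are at least three such edges, hence exactly three. -/
lemma IsCliqueUpTo.sum_degreeIn_le (hB : IsCliqueUpTo G B x y)
    (hvA : ∀ a ∈ A, G.Adj v a) (hvB : v ∉ B) (hAB : Disjoint A B) (hAcard : #A = 6)
    (hBcard : #B = 5) (hAA : ∀ a ∈ A, 3 ≤ degreeIn G A a) (hBA : ∀ b ∈ B, 2 ≤ degreeIn G A b)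
    (hxA : 3 ≤ degreeIn G A x) (hyA : 3 ≤ degreeIn G A y) (hminor : ¬ G.HasCompleteMinor 6) :
    ∑ a ∈ A, degreeIn G A a ≤ 18 ∧ ∑ b ∈ B, degreeIn G A b ≤ 12 := by
  rw [show 6 = #B + 1 by omega] at hminor
  have hPQ : Disjoint {a ∈ A | G.Adj x a} {a ∈ A | G.Adj y a} := disjoint_filter.2
    fun a ha hxa hya =>
      hminor (hB.hasCompleteMinor_of_common_neighbor hvA hvB hAB hBA ha hxa hya)
  obtain ⟨hPQA, hPcard, hQcard⟩ := union_eq_and_card_eq_of_card_le (filter_subset _ _)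
    (filter_subset _ _) hPQ hAcard.le hxA hyA
  have hBsum := hB.sum_eq (degreeIn G A)
  have hZcard := hB.card_erase_erase
  have hx : degreeIn G A x = 3 := hPcard
  have hy : degreeIn G A y = 3 := hQcard
  set P := {a ∈ A | G.Adj x a} with hP
  set Q := {a ∈ A | G.Adj y a} with hQ
  set Z := (B.erase x).erase y
  set E := {p ∈ P ×ˢ Q | G.Adj p.1 p.2} with hE
  obtain ⟨hEZ, hZE⟩ := card_le_and_forall_exists_of_forall_exists_eq_pair
    (N := fun z => {w ∈ A | G.Adj z w}) (E := E) (Z := Z) hPQ (filter_subset _ _) fun p hp => by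
      simp only [hE, hP, hQ, mem_filter, mem_product] at hp
      exact hB.exists_filter_adj_eq_pair hvA hvB hAB hBA hyA hp.1.1.1 hp.1.2.1 hp.1.1.2 hp.2
        hp.1.2.2 hminor
  have hPP := sum_degreeIn_self_add_card_le (G := G) P
  have hQQ := sum_degreeIn_self_add_card_le (G := G) Q
  have hsum := sum_degreeIn_union_self (G := G) hPQ
  have hEcard : ∑ a ∈ P, degreeIn G Q a = #E := sum_degreeIn_eq_card_filter P Q
  rw [hPQA] at hsum
  rw [hPcard] at hPP
  rw [hQcard] at hQQ
  have hAA_le : #A • 3 ≤ ∑ a ∈ A, degreeIn G A a := card_nsmul_le_sum _ _ _ hAA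
  have hZA : ∑ z ∈ Z, degreeIn G A z ≤ #Z • 2 := sum_le_card_nsmul _ _ _ fun z hz => by
    obtain ⟨p, -, hp⟩ := hZE (by rw [smul_eq_mul] at hAA_le; omega) z hz
    rw [degreeIn, hp]
    exact card_le_two
  rw [smul_eq_mul] at hAA_le hZA
  omega

variable [Fintype V]

lemma sum_degreeIn_compl_neighborFinset_le (hcard : Fintype.card V = 12)
    (hdeg : ∀ u, 6 ≤ G.degree u) (hsize : 38 ≤ #G.edgeFinset) (hv : G.degree v = 6)
    (hcodeg : ∀ a, G.Adj v a → 3 ≤ degreeIn G (G.neighborFinset v) a)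
    (hminor : ¬ G.HasCompleteMinor 6) :
    ∑ b ∈ Gᶜ.neighborFinset v, degreeIn G (Gᶜ.neighborFinset v) b ≤ 16 := by
  have hBcard := card_compl_neighborFinset_add (G := G) v
  have hsum := two_mul_card_edgeFinset_eq (G := G) v
  have hAcard : #(G.neighborFinset v) = 6 := hv
  have hvA (a : V) (ha : a ∈ G.neighborFinset v) : G.Adj v a := (G.mem_neighborFinset v a).1 ha
  have hvB (b : V) (hb : b ∈ Gᶜ.neighborFinset v) : Gᶜ.Adj v b := (Gᶜ.mem_neighborFinset v b).1 hb
  have hBdeg (b : V) (hb : b ∈ Gᶜ.neighborFinset v) := degree_eq_of_compl_adj (hvB b hb)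
  set A := G.neighborFinset v
  set B := Gᶜ.neighborFinset v
  replace hBcard : #B = 5 := by omega
  by_contra! hlt
  obtain ⟨x, y, hB⟩ := exists_isCliqueUpTo (G := G) (S := B) (by rw [hBcard]; omega) (by omega)
  have hv_notMem : v ∉ B := fun h => (hvB v h).ne rfl
  have hAB : Disjoint A B := disjoint_left.2 fun a ha hb => (hvB a hb).2 (hvA a ha)
  have hBA (b : V) (hb : b ∈ B) : 2 ≤ degreeIn G A b := by
    have := degreeIn_lt_card (G := G) hb
    have := hBdeg b hb
    have := hdeg b
    omega
  have hxy : ¬ G.Adj x y := fun h => hminor <| by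
    simpa only [hBcard] using hB.hasCompleteMinor_of_adj hvA hv_notMem hAB
      (fun b hb => (Nat.le_succ 1).trans (hBA b hb)) h
  have three_le {b c : V} (hb : b ∈ B) (hc : c ∈ B) (hbc : b ≠ c) (h : ¬ G.Adj b c) :
      3 ≤ degreeIn G A b := by
    have := degreeIn_add_two_le_card hb hc hbc h
    have := hBdeg b hb
    have := hdeg b
    omega
  have hle := hB.sum_degreeIn_le hvA hv_notMem hAB hAcard hBcard (fun a ha => hcodeg a (hvA a ha))
    hBA (three_le hB.left_mem hB.right_mem hB.ne hxy)
    (three_le hB.right_mem hB.left_mem hB.ne.symm fun h => hxy h.symm) hminor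
  have hBB := sum_degreeIn_self_add_card_le (G := G) B
  rw [hBcard] at hBB
  omega

end FarSide

/-! ### Degrees in a counterexample -/

section Counterexample

/-- A counterexample to the theorem, as the object of the proof by contradiction. -/
structure IsCounterexample {V : Type*} [Fintype V] (G : SimpleGraph V) : Prop where
  card_eq : Fintype.card V = 12
  six_le_degree (v : V) : 6 ≤ G.degree v
  card_edgeFinset_eq : #G.edgeFinset = 38
  not_hasCompleteMinor : ¬ G.HasCompleteMinor 6

/-- The set of vertices of degree `d`. -/
noncomputable def verticesOfDegree {V : Type*} [Fintype V] (G : SimpleGraph V) (d : ℕ) : Finset V :=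
  {v | G.degree v = d}

variable {V : Type*} [Fintype V] {G : SimpleGraph V} {v x y : V}

lemma mem_verticesOfDegree {d : ℕ} : v ∈ verticesOfDegree G d ↔ G.degree v = d := by
  simp [verticesOfDegree]

lemma three_le_codegree_of_not_hasCompleteMinor_six (hcard : 6 ≤ Fintype.card V)
    (hcard' : Fintype.card V ≤ 12) (hsize : 4 * Fintype.card V ≤ #G.edgeFinset + 10)
    (hG : ¬ G.HasCompleteMinor 6) (hxy : G.Adj x y) :
    3 ≤ degreeIn G (G.neighborFinset x) y := by
  by_contra! hlt
  have hcontr : 4 * (Fintype.card V - 1) ≤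
      #((contractEdge G x y).induce {y}ᶜ).edgeFinset + 9 := by
    have := card_edgeFinset_le_contractEdge hxy
    rw [card_edgeFinset_induce_contractEdge hxy]
    omega
  have hcompl : Fintype.card ({y}ᶜ : Set V) = Fintype.card V - 1 := by
    rw [Fintype.card_compl_set, Set.card_singleton]
  exact hG <| hasCompleteMinor_of_isMinor
    (hasCompleteMinor_six_of_card_le_eleven (by omega) hcompl (by omega) (by convert hcontr))
    (isMinor_induce_contractEdge hxy)

lemma IsCounterexample.three_le_codegree (h : IsCounterexample G) (hxy : G.Adj x y) :
    3 ≤ degreeIn G (G.neighborFinset x) y :=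
  three_le_codegree_of_not_hasCompleteMinor_six (by rw [h.card_eq]; norm_num) h.card_eq.le
    (by rw [h.card_eq, h.card_edgeFinset_eq]) h.not_hasCompleteMinor hxy

lemma IsCounterexample.sum_degree_eq (h : IsCounterexample G) : ∑ u, G.degree u = 76 := by
  rw [G.sum_degrees_eq_twice_card_edges, h.card_edgeFinset_eq]

lemma sum_degree_compl_neighborFinset_eq (v : V) :
    ∑ b ∈ Gᶜ.neighborFinset v, G.degree b =
      ∑ b ∈ Gᶜ.neighborFinset v, degreeIn G (G.neighborFinset v) b +
        ∑ b ∈ Gᶜ.neighborFinset v, degreeIn G (Gᶜ.neighborFinset v) b := by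
  rw [← sum_add_distrib]
  exact sum_congr rfl fun b hb => degree_eq_of_compl_adj ((Gᶜ.mem_neighborFinset v b).1 hb)

lemma IsCounterexample.sum_degree_compl_le (h : IsCounterexample G) (hv : G.degree v = 6) :
    2 * ∑ b ∈ Gᶜ.neighborFinset v, G.degree b +
      ∑ a ∈ G.neighborFinset v, degreeIn G (G.neighborFinset v) a ≤ 80 := by
  have hfar := sum_degreeIn_compl_neighborFinset_le h.card_eq h.six_le_degree
    h.card_edgeFinset_eq.ge hv (fun a => h.three_le_codegree) h.not_hasCompleteMinor
  have hsize := two_mul_card_edgeFinset_eq (G := G) v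
  rw [h.card_edgeFinset_eq] at hsize
  rw [sum_degree_compl_neighborFinset_eq]
  omega

lemma IsCounterexample.le_sum_degreeIn (h : IsCounterexample G) (hv : G.degree v = 6) :
    18 ≤ ∑ a ∈ G.neighborFinset v, degreeIn G (G.neighborFinset v) a := by
  have hle : #(G.neighborFinset v) • 3 ≤ _ := card_nsmul_le_sum _ _ _ fun a ha =>
    h.three_le_codegree ((G.mem_neighborFinset v a).1 ha)
  rwa [SimpleGraph.card_neighborFinset_eq_degree, hv] at hle

lemma IsCounterexample.degree_le_seven (h : IsCounterexample G) (x : V) : G.degree x ≤ 7 := by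
  by_contra! hx
  have hfar (b : V) (hb : b ∈ Gᶜ.neighborFinset x) : 7 ≤ G.degree b := by
    by_contra! hb7
    have hb6 : G.degree b = 6 := by have := h.six_le_degree b; omega
    have hxb : x ∈ Gᶜ.neighborFinset b := by simpa [SimpleGraph.adj_comm, eq_comm] using hb
    have hsum := h.sum_degree_compl_le hb6
    have hnear := h.le_sum_degreeIn hb6
    have hrest : #((Gᶜ.neighborFinset b).erase x) • 6 ≤
        ∑ u ∈ (Gᶜ.neighborFinset b).erase x, G.degree u :=
      card_nsmul_le_sum _ _ _ fun u _ => h.six_le_degree u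
    have hcard := card_compl_neighborFinset_add (G := G) b
    rw [← add_sum_erase _ _ hxb] at hsum
    rw [card_erase_of_mem hxb, smul_eq_mul] at hrest
    have := h.card_eq
    omega
  have hnear : #(G.neighborFinset x) • 6 ≤ ∑ a ∈ G.neighborFinset x, G.degree a :=
    card_nsmul_le_sum _ _ _ fun a _ => h.six_le_degree a
  have hfar_sum : #(Gᶜ.neighborFinset x) • 7 ≤ ∑ b ∈ Gᶜ.neighborFinset x, G.degree b :=
    card_nsmul_le_sum _ _ _ hfar
  have hsum := sum_univ_eq_add_neighborFinset_add_compl (G := G) x fun u => G.degree u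
  have hcard := card_compl_neighborFinset_add (G := G) x
  rw [h.sum_degree_eq] at hsum
  rw [h.card_eq] at hcard
  rw [smul_eq_mul] at hnear hfar_sum
  rw [SimpleGraph.card_neighborFinset_eq_degree] at hnear
  omega

lemma IsCounterexample.degree_eq_six_iff (h : IsCounterexample G) :
    G.degree v = 6 ↔ v ∉ verticesOfDegree G 7 := by
  rw [mem_verticesOfDegree]
  have := h.six_le_degree v
  have := h.degree_le_seven v
  omega

lemma IsCounterexample.sum_degree_eq_add (h : IsCounterexample G) (S : Finset V) :
    ∑ u ∈ S, G.degree u = 6 * #S + #{u ∈ S | u ∈ verticesOfDegree G 7} := by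
  rw [card_filter, mul_comm, ← smul_eq_mul, ← sum_const, ← sum_add_distrib]
  refine sum_congr rfl fun u _ => ?_
  split_ifs with hu
  · rw [mem_verticesOfDegree.1 hu]
  · rw [h.degree_eq_six_iff.2 hu]

lemma IsCounterexample.card_verticesOfDegree_seven (h : IsCounterexample G) :
    #(verticesOfDegree G 7) = 4 := by
  have hsum := h.sum_degree_eq_add univ
  rw [h.sum_degree_eq, card_univ, h.card_eq, filter_univ_mem] at hsum
  omega

lemma IsCounterexample.two_mul_add_sum_degreeIn_le (h : IsCounterexample G) (hy : G.degree y = 6) :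
    2 * (4 - degreeIn G (verticesOfDegree G 7) y) +
      ∑ a ∈ G.neighborFinset y, degreeIn G (G.neighborFinset y) a ≤ 20 := by
  have hsum := h.sum_degree_compl_le hy
  have hcard := card_compl_neighborFinset_add (G := G) y
  have hfar := card_eq_degreeIn_add (G := G) (h.degree_eq_six_iff.1 hy)
  rw [h.card_verticesOfDegree_seven] at hfar
  rw [h.card_eq] at hcard
  rw [h.sum_degree_eq_add] at hsum
  omega

lemma IsCounterexample.three_le_degreeIn_verticesOfDegree_seven (h : IsCounterexample G)
    (hy : G.degree y = 6) : 3 ≤ degreeIn G (verticesOfDegree G 7) y := by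
  have := h.two_mul_add_sum_degreeIn_le hy
  have := h.le_sum_degreeIn hy
  omega

lemma IsCounterexample.degreeIn_neighborFinset_eq_three (h : IsCounterexample G)
    (hy : G.degree y = 6) (hX : degreeIn G (verticesOfDegree G 7) y = 3) {a : V}
    (ha : G.Adj y a) : degreeIn G (G.neighborFinset y) a = 3 := by
  have hsum := h.two_mul_add_sum_degreeIn_le hy
  have hge (a : V) (ha : a ∈ G.neighborFinset y) : 3 ≤ degreeIn G (G.neighborFinset y) a :=
    h.three_le_codegree ((G.mem_neighborFinset y a).1 ha)
  refine ((sum_eq_sum_iff_of_le hge).1 ?_ a ((G.mem_neighborFinset y a).2 ha)).symm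
  have hle := h.le_sum_degreeIn hy
  rw [sum_const, SimpleGraph.card_neighborFinset_eq_degree, hy, smul_eq_mul]
  omega

lemma IsCounterexample.sum_degreeIn_add_sum_compl (h : IsCounterexample G) :
    ∑ x ∈ verticesOfDegree G 7, degreeIn G (verticesOfDegree G 7) x +
      ∑ y ∈ (verticesOfDegree G 7)ᶜ, degreeIn G (verticesOfDegree G 7) y = 28 := by
  rw [sum_add_sum_compl, sum_degreeIn_comm, ← show #(verticesOfDegree G 7) * 7 = 28 by
    rw [h.card_verticesOfDegree_seven], ← smul_eq_mul]
  refine sum_eq_card_nsmul fun x hx => ?_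
  rw [degreeIn_univ, mem_verticesOfDegree.1 hx]

-- Otherwise `y` is adjacent to every vertex of degree 7, and each of them to another one.
lemma IsCounterexample.degreeIn_verticesOfDegree_seven_eq_three (h : IsCounterexample G)
    (hy : G.degree y = 6) : degreeIn G (verticesOfDegree G 7) y = 3 := by
  by_contra hne
  have hy3 := h.three_le_degreeIn_verticesOfDegree_seven hy
  have hyX := h.degree_eq_six_iff.1 hy
  have hXcard := h.card_verticesOfDegree_seven
  have hsum := h.sum_degreeIn_add_sum_compl
  have hY (u : V) (hu : u ∈ (verticesOfDegree G 7)ᶜ) : 3 ≤ degreeIn G (verticesOfDegree G 7) u :=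
    h.three_le_degreeIn_verticesOfDegree_seven (h.degree_eq_six_iff.2 (mem_compl.1 hu))
  have hYcard : #(verticesOfDegree G 7)ᶜ = 8 := by rw [card_compl, h.card_eq, hXcard]
  set X := verticesOfDegree G 7
  have hXN : X ⊆ G.neighborFinset y := fun x hx =>
    (G.mem_neighborFinset y x).2 (adj_of_card_le_degreeIn (by omega) hx)
  have hX (x : V) (hx : x ∈ X) : 1 ≤ degreeIn G X x := by
    have hcodeg := h.three_le_codegree ((G.mem_neighborFinset y x).1 (hXN hx))
    have hsplit := degreeIn_union (G := G) (disjoint_sdiff (s := X) (t := G.neighborFinset y)) x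
    have hle : degreeIn G (G.neighborFinset y \ X) x ≤ _ := card_filter_le _ _
    rw [union_sdiff_of_subset hXN] at hsplit
    rw [card_sdiff_of_subset hXN, SimpleGraph.card_neighborFinset_eq_degree] at hle
    omega
  have hXsum : #X • 1 ≤ ∑ x ∈ X, degreeIn G X x := card_nsmul_le_sum X _ _ hX
  have hYsum : #(Xᶜ.erase y) • 3 ≤ ∑ u ∈ Xᶜ.erase y, degreeIn G X u :=
    card_nsmul_le_sum _ _ _ fun u hu => hY u (mem_of_mem_erase hu)
  rw [← add_sum_erase _ _ (mem_compl.2 hyX)] at hsum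
  rw [card_erase_of_mem (mem_compl.2 hyX)] at hYsum
  rw [smul_eq_mul] at hXsum hYsum
  omega

lemma IsCounterexample.sum_degreeIn_verticesOfDegree_seven (h : IsCounterexample G) :
    ∑ x ∈ verticesOfDegree G 7, degreeIn G (verticesOfDegree G 7) x = 4 := by
  have hsum := h.sum_degreeIn_add_sum_compl
  rw [sum_eq_card_nsmul (s := (verticesOfDegree G 7)ᶜ) fun y hy =>
    h.degreeIn_verticesOfDegree_seven_eq_three (h.degree_eq_six_iff.2 (mem_compl.1 hy)),
    card_compl, h.card_eq, h.card_verticesOfDegree_seven, smul_eq_mul] at hsum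
  omega

end Counterexample

/-! ### Cubic neighbourhoods -/

section CubicNeighborhood

/-- The configuration around a vertex `x` of degree 7 in a counterexample: `T ∪ C` is the
neighbourhood of a vertex of degree 6 not adjacent to `x`, and `T` consists of the other three
vertices of degree 7. -/
structure IsCubicNeighborhood {V : Type*} (G : SimpleGraph V) (T C : Finset V) (x : V) : Prop where
  disjoint : Disjoint T C
  card_left : #T = 3
  card_right : #C = 3
  degreeIn_eq (a : V) : a ∈ T ∪ C → degreeIn G (T ∪ C) a = 3
  three_le_degreeIn : 3 ≤ degreeIn G (T ∪ C) x
  exists_triangle (c u : V) : c ∈ C → G.Adj x c → G.Adj c u → ¬ G.Adj x u →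
    ∃ w ∈ T ∪ C, G.Adj c w ∧ G.Adj u w

variable {V : Type*} {G : SimpleGraph V} {T C : Finset V} {c p q r t x : V}

lemma IsCubicNeighborhood.degreeIn_add_degreeIn (h : IsCubicNeighborhood G T C x)
    (ht : t ∈ T ∪ C) : degreeIn G T t + degreeIn G C t = 3 := by
  rw [← degreeIn_union h.disjoint, h.degreeIn_eq t ht]

lemma IsCubicNeighborhood.three_le_degreeIn_add_degreeIn (h : IsCubicNeighborhood G T C x) :
    3 ≤ degreeIn G T x + degreeIn G C x := by
  rw [← degreeIn_union h.disjoint]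
  exact h.three_le_degreeIn

lemma IsCubicNeighborhood.adj_of_degreeIn_eq_zero (h : IsCubicNeighborhood G T C x) (ht : t ∈ T)
    (ht0 : degreeIn G T t = 0) (hc : c ∈ C) : G.Adj t c := by
  have hsum := h.degreeIn_add_degreeIn (mem_union_left C ht)
  exact adj_of_card_le_degreeIn (by rw [h.card_right]; omega) hc

lemma IsCubicNeighborhood.not_adj_of_forall_adj (h : IsCubicNeighborhood G T C x) (hc : c ∈ C)
    (hcT : ∀ t ∈ T, G.Adj c t) {c' : V} (hc' : c' ∈ C) : ¬ G.Adj c c' := by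
  intro hadj
  have hsum := h.degreeIn_add_degreeIn (mem_union_right T hc)
  have hT : degreeIn G T c = 3 := by rw [degreeIn, filter_true_of_mem hcT, h.card_left]
  have hC : 0 < degreeIn G C c := card_pos.2 ⟨c', mem_filter.2 ⟨hc', hadj⟩⟩
  omega

-- Here `G` induces `K_{3,3}` on `T ∪ C`, so that no edge of `T ∪ C` is in a triangle of `T ∪ C`.
lemma IsCubicNeighborhood.adj_of_forall_degreeIn_eq_zero (h : IsCubicNeighborhood G T C x)
    (hT : ∀ t ∈ T, degreeIn G T t = 0) (hr : r ∈ T) : G.Adj x r := by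
  by_contra hxr
  have hTC {t c : V} (ht : t ∈ T) (hc : c ∈ C) : G.Adj c t :=
    (h.adj_of_degreeIn_eq_zero ht (hT t ht) hc).symm
  have hxT := degreeIn_add_card_le (singleton_subset_iff.2 hr) (u := x) (G := G) (by simpa)
  have hx := h.three_le_degreeIn_add_degreeIn
  rw [card_singleton, h.card_left] at hxT
  obtain ⟨c, hc, hxc⟩ := exists_adj_of_degreeIn_pos (G := G) (S := C) (u := x) (by omega)
  obtain ⟨w, hw, hcw, hrw⟩ :=
    h.exists_triangle c r hc hxc (hTC hr hc) hxr
  rcases mem_union.1 hw with hwT | hwC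
  · exact filter_eq_empty_iff.1 (card_eq_zero.1 (hT r hr)) hwT hrw
  · exact h.not_adj_of_forall_adj hc (fun t ht => hTC ht hc) hwC hcw

lemma IsCubicNeighborhood.not_adj_of_adj_of_adj (h : IsCubicNeighborhood G {p, q, r} C x)
    (hpq : ¬ G.Adj p q) (hpr : ¬ G.Adj p r) (hc : c ∈ C) (hqc : G.Adj q c) (hrc : G.Adj r c)
    {c' : V} (hc' : c' ∈ C) : ¬ G.Adj c c' := by
  have hp : degreeIn G {p, q, r} p = 0 := by simp [degreeIn, hpq, hpr]
  have hpc := h.adj_of_degreeIn_eq_zero (by simp) hp hc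
  exact h.not_adj_of_forall_adj hc (by simp [hpc.symm, hqc.symm, hrc.symm]) hc'

lemma IsCubicNeighborhood.degreeIn_right_eq_two (h : IsCubicNeighborhood G {p, q, r} C x)
    (hpq : ¬ G.Adj p q) (hqr : G.Adj q r) : degreeIn G C q = 2 := by
  have hsum := h.degreeIn_add_degreeIn (t := q) (by simp)
  have hq : {w ∈ ({p, q, r} : Finset V) | G.Adj q w} = {r} := by
    simp [filter_insert, filter_singleton, hqr, G.adj_comm q p, hpq]
  rw [degreeIn, hq, card_singleton] at hsum
  omega

lemma IsCubicNeighborhood.adj_of_not_adj (h : IsCubicNeighborhood G {p, q, r} C x)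
    (hpq : ¬ G.Adj p q) (hqr : G.Adj q r) (hc : c ∈ C) (hqc : ¬ G.Adj q c) {c' : V}
    (hc' : c' ∈ C) (hne : c ≠ c') : G.Adj q c' := by
  by_contra hqc'
  have hle := degreeIn_add_card_le (G := G) (S := C) (T := {c, c'}) (u := q)
    (by simp [insert_subset_iff, hc, hc']) (by simp [hqc, hqc'])
  rw [h.degreeIn_right_eq_two hpq hqr, card_pair hne, h.card_right] at hle
  omega

lemma IsCubicNeighborhood.swap (h : IsCubicNeighborhood G {p, q, r} C x) :
    IsCubicNeighborhood G {p, r, q} C x := by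
  rwa [pair_comm r q]

lemma IsCubicNeighborhood.adj_or_adj (h : IsCubicNeighborhood G {p, q, r} C x)
    (hpq : ¬ G.Adj p q) (hpr : ¬ G.Adj p r) (hqr : G.Adj q r) (hc : c ∈ C) :
    G.Adj q c ∨ G.Adj r c := by
  by_contra! hnot
  have hT := degreeIn_add_card_le (G := G) (S := {p, q, r}) (T := {q, r}) (u := c)
    (subset_insert _ _) (by simpa [G.adj_comm c] using hnot)
  have hsum := h.degreeIn_add_degreeIn (mem_union_right _ hc)
  rw [h.card_left, card_pair hqr.ne] at hT
  obtain ⟨c', hc', hadj⟩ := exists_adj_of_degreeIn_pos (G := G) (S := C) (u := c) (by omega)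
  exact h.not_adj_of_adj_of_adj hpq hpr hc' (h.adj_of_not_adj hpq hqr hc hnot.1 hc' hadj.ne)
    (h.swap.adj_of_not_adj hpr hqr.symm hc hnot.2 hc' hadj.ne) hc hadj.symm

lemma IsCubicNeighborhood.not_adj_center (h : IsCubicNeighborhood G {p, q, r} C x)
    (hpq : ¬ G.Adj p q) (hpr : ¬ G.Adj p r) (hqr : G.Adj q r) (hxr : ¬ G.Adj x r) (hc : c ∈ C)
    (hqc : ¬ G.Adj q c) : ¬ G.Adj x c := by
  intro hxc
  have hrc : G.Adj r c := (h.adj_or_adj hpq hpr hqr hc).resolve_left hqc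
  obtain ⟨w, hw, hcw, hrw⟩ := h.exists_triangle c r hc hxc hrc.symm hxr
  rcases mem_union.1 hw with hwT | hwC
  · rw [mem_insert, mem_insert, mem_singleton] at hwT
    rcases hwT with rfl | rfl | rfl
    · exact hpr hrw.symm
    · exact hqc hcw.symm
    · exact hrw.ne rfl
  · exact h.not_adj_of_adj_of_adj hpq hpr hwC (h.adj_of_not_adj hpq hqr hc hqc hwC hcw.ne) hrw
      hc hcw.symm

lemma IsCubicNeighborhood.not_adj_matching (h : IsCubicNeighborhood G {p, q, r} C x)
    (hpq : ¬ G.Adj p q) (hpr : ¬ G.Adj p r) (hxq : ¬ G.Adj x q) (hxr : ¬ G.Adj x r) :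
    ¬ G.Adj q r := by
  intro hqr
  have exists_not_adj {s : V} (hs : degreeIn G C s = 2) : ∃ c ∈ C, ¬ G.Adj s c :=
    exists_not_adj_of_degreeIn_lt_card (by rw [hs, h.card_right]; norm_num)
  obtain ⟨c, hc, hqc⟩ := exists_not_adj (h.degreeIn_right_eq_two hpq hqr)
  obtain ⟨d, hd, hrd⟩ := exists_not_adj (h.swap.degreeIn_right_eq_two hpr hqr.symm)
  have hcd : c ≠ d := by
    rintro rfl
    exact (h.adj_or_adj hpq hpr hqr hc).elim hqc hrd
  have hxc := h.not_adj_center hpq hpr hqr hxr hc hqc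
  have hxd := h.swap.not_adj_center hpr hpq hqr.symm hxq hd hrd
  have hC := degreeIn_add_card_le (G := G) (S := C) (T := {c, d}) (u := x)
    (by simp [insert_subset_iff, hc, hd]) (by simp [hxc, hxd])
  have hT := degreeIn_add_card_le (G := G) (S := {p, q, r}) (T := {q, r}) (u := x)
    (subset_insert _ _) (by simp [hxq, hxr])
  have hx := h.three_le_degreeIn_add_degreeIn
  rw [card_pair hcd, h.card_right] at hC
  rw [card_pair hqr.ne, h.card_left] at hT
  omega

end CubicNeighborhood

/-! ### The vertices of degree seven -/

section DegreeSeven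

variable {V : Type*} {G : SimpleGraph V} {X : Finset V} {c u x y : V}

lemma exists_matching (hX : #X = 4) (hone : ∀ x ∈ X, degreeIn G X x = 1) :
    ∃ x ∈ X, ∃ p q r, X.erase x = {p, q, r} ∧ ¬ G.Adj p q ∧ ¬ G.Adj p r ∧ ¬ G.Adj x q ∧
      ¬ G.Adj x r ∧ G.Adj q r := by
  have exists_adj {u : V} (hu : u ∈ X) : ∃ w ∈ X, G.Adj u w :=
    exists_adj_of_degreeIn_pos (by rw [hone u hu]; norm_num)
  obtain ⟨x, hx⟩ := card_pos.1 (show 0 < #X by omega)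
  obtain ⟨p, hp, hxp⟩ := exists_adj hx
  have hpT : p ∈ X.erase x := mem_erase.2 ⟨hxp.ne', hp⟩
  obtain ⟨q, r, hqr, hT⟩ : ∃ q r, q ≠ r ∧ (X.erase x).erase p = {q, r} := card_eq_two.1 <| by
    rw [card_erase_of_mem hpT, card_erase_of_mem hx, hX]
  have eq_of_adj {u v w : V} (hu : u ∈ X) (hv : v ∈ X) (hw : w ∈ X) (huv : G.Adj u v)
      (huw : G.Adj u w) : v = w :=
    card_le_one.1 (hone u hu).le v (mem_filter.2 ⟨hv, huv⟩) w (mem_filter.2 ⟨hw, huw⟩)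
  have hmem : ∀ u, (u ≠ p ∧ u ≠ x ∧ u ∈ X) ↔ u = q ∨ u = r := fun u => by
    simpa only [mem_erase, mem_insert, mem_singleton] using Finset.ext_iff.1 hT u
  obtain ⟨hqp, hqx, hq⟩ := (hmem q).2 (.inl rfl)
  obtain ⟨hrp, hrx, hr⟩ := (hmem r).2 (.inr rfl)
  have hxq : ¬ G.Adj x q := fun h => hqp (eq_of_adj hx hq hp h hxp)
  have hxr : ¬ G.Adj x r := fun h => hrp (eq_of_adj hx hr hp h hxp)
  have hpq : ¬ G.Adj p q := fun h => hqx (eq_of_adj hp hq hx h hxp.symm)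
  have hpr : ¬ G.Adj p r := fun h => hrx (eq_of_adj hp hr hx h hxp.symm)
  obtain ⟨w, hw, hqw⟩ := exists_adj hq
  have hwx : w ≠ x := by rintro rfl; exact hxq hqw.symm
  have hwp : w ≠ p := by rintro rfl; exact hpq hqw.symm
  obtain rfl : w = r := ((hmem w).1 ⟨hwp, hwx, hw⟩).resolve_left hqw.ne'
  exact ⟨x, hx, p, q, w, by rw [← hT, insert_erase hpT], hpq, hpr, hxq, hxr, hqw⟩

lemma exists_star_or_matching (hX : #X = 4) (hsum : ∑ x ∈ X, degreeIn G X x = 4) :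
    ∃ x ∈ X, ((∀ t ∈ X.erase x, degreeIn G (X.erase x) t = 0) ∧ ∃ r ∈ X.erase x, ¬ G.Adj x r) ∨
      ∃ p q r, X.erase x = {p, q, r} ∧ ¬ G.Adj p q ∧ ¬ G.Adj p r ∧ ¬ G.Adj x q ∧ ¬ G.Adj x r ∧
        G.Adj q r := by
  by_cases hstar : ∃ x ∈ X, 2 ≤ degreeIn G X x
  · obtain ⟨x, hx, hx2⟩ := hstar
    have hsplit := sum_degreeIn_self_eq_erase (G := G) hx
    refine ⟨x, hx, .inl ⟨sum_eq_zero_iff.1 (by omega), exists_not_adj_of_degreeIn_lt_card ?_⟩⟩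
    rw [degreeIn_erase_self, card_erase_of_mem hx]
    omega
  · push Not at hstar
    have hle (x : V) (hx : x ∈ X) : degreeIn G X x ≤ 1 := Nat.le_of_lt_succ (hstar x hx)
    have hone := (sum_eq_sum_iff_of_le hle).1 (by rw [hsum, sum_const, hX, smul_eq_mul])
    obtain ⟨x, hx, hmatching⟩ := exists_matching hX hone
    exact ⟨x, hx, .inr hmatching⟩

variable [Fintype V]

lemma IsCounterexample.exists_common_neighbor (h : IsCounterexample G) (hxy : ¬ G.Adj y x)
    (hne : y ≠ x) (hc : G.degree c = 6) (hyc : G.Adj y c)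
    (hcubic : degreeIn G (G.neighborFinset y) c = 3) (hxc : G.Adj x c) (hcu : G.Adj c u)
    (hxu : ¬ G.Adj x u) : ∃ w ∈ G.neighborFinset y, G.Adj c w ∧ G.Adj u w := by
  by_contra! hnone
  have hcodeg : 3 ≤ degreeIn G (G.neighborFinset c) u := h.three_le_codegree hcu
  have hcdeg := degree_eq_of_adj hyc
  have hx : x ∈ {w ∈ Gᶜ.neighborFinset y | G.Adj c w} := by
    simpa [hxc.symm] using ⟨hne, hxy⟩
  have hsub : {w ∈ G.neighborFinset c | G.Adj u w} ⊆
      insert y ({w ∈ Gᶜ.neighborFinset y | G.Adj c w}.erase x) := by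
    intro w hw
    simp only [mem_filter, SimpleGraph.mem_neighborFinset, mem_insert, mem_erase,
      SimpleGraph.compl_adj] at hw hnone ⊢
    by_cases hwy : w = y
    · exact .inl hwy
    · refine .inr ⟨?_, ⟨Ne.symm hwy, fun hyw => hnone w hyw hw.1 hw.2⟩, hw.1⟩
      rintro rfl
      exact hxu hw.2.symm
  have hle := (card_le_card hsub).trans (card_insert_le _ _)
  rw [card_erase_of_mem hx] at hle
  change degreeIn G (G.neighborFinset c) u ≤ degreeIn G (Gᶜ.neighborFinset y) c - 1 + 1 at hle
  omega

lemma IsCounterexample.exists_not_adj_degree_eq_six (h : IsCounterexample G)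
    (hx : x ∈ verticesOfDegree G 7) : ∃ y, G.degree y = 6 ∧ ¬ G.Adj y x := by
  have hle : degreeIn G (verticesOfDegree G 7)ᶜ x ≤ degreeIn G univ x :=
    card_le_card (filter_subset_filter _ (subset_univ _))
  rw [degreeIn_univ, mem_verticesOfDegree.1 hx] at hle
  obtain ⟨y, hy, hxy⟩ := exists_not_adj_of_degreeIn_lt_card (G := G)
    (S := (verticesOfDegree G 7)ᶜ) (u := x) (by
      rw [card_compl, h.card_eq, h.card_verticesOfDegree_seven]; omega)
  exact ⟨y, h.degree_eq_six_iff.2 (mem_compl.1 hy), fun hyx => hxy hyx.symm⟩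

lemma IsCounterexample.erase_subset_neighborFinset (h : IsCounterexample G)
    (hx : x ∈ verticesOfDegree G 7) (hy : G.degree y = 6) (hyx : ¬ G.Adj y x) :
    (verticesOfDegree G 7).erase x ⊆ G.neighborFinset y := by
  intro t ht
  rw [SimpleGraph.mem_neighborFinset]
  by_contra hyt
  obtain ⟨htx, htX⟩ := mem_erase.1 ht
  have hle := degreeIn_add_card_le (G := G) (S := verticesOfDegree G 7) (T := {x, t}) (u := y)
    (by simp [insert_subset_iff, hx, htX]) (by simp [hyx, hyt])
  rw [h.degreeIn_verticesOfDegree_seven_eq_three hy, card_pair htx.symm,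
    h.card_verticesOfDegree_seven] at hle
  omega

lemma IsCounterexample.exists_isCubicNeighborhood (h : IsCounterexample G)
    (hx : x ∈ verticesOfDegree G 7) :
    ∃ C, IsCubicNeighborhood G ((verticesOfDegree G 7).erase x) C x := by
  obtain ⟨y, hy, hyx⟩ := h.exists_not_adj_degree_eq_six hx
  have hsub := h.erase_subset_neighborFinset hx hy hyx
  have hunion := union_sdiff_of_subset hsub
  have hcard : #((verticesOfDegree G 7).erase x) = 3 := by
    rw [card_erase_of_mem hx, h.card_verticesOfDegree_seven]
  have hcubic {a : V} (ha : G.Adj y a) : degreeIn G (G.neighborFinset y) a = 3 :=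
    h.degreeIn_neighborFinset_eq_three hy (h.degreeIn_verticesOfDegree_seven_eq_three hy) ha
  have hne : y ≠ x := by
    rintro rfl
    exact h.degree_eq_six_iff.1 hy hx
  refine ⟨G.neighborFinset y \ (verticesOfDegree G 7).erase x, disjoint_sdiff, hcard, ?_, ?_, ?_,
    ?_⟩
  · rw [card_sdiff_of_subset hsub, SimpleGraph.card_neighborFinset_eq_degree, hy, hcard]
  · rw [hunion]
    exact fun a ha => hcubic ((G.mem_neighborFinset y a).1 ha)
  · have hxfar : Gᶜ.Adj y x := ⟨hne, hyx⟩
    have hdeg := degree_eq_of_compl_adj hxfar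
    have hlt := degreeIn_lt_card (G := G) ((Gᶜ.mem_neighborFinset y x).2 hxfar)
    have hfar := card_compl_neighborFinset_add (G := G) y
    rw [mem_verticesOfDegree.1 hx] at hdeg
    rw [h.card_eq] at hfar
    rw [hunion]
    omega
  · rw [hunion]
    intro c u hc hxc hcu hxu
    rw [mem_sdiff, SimpleGraph.mem_neighborFinset, mem_erase, not_and] at hc
    have hc6 := h.degree_eq_six_iff.2 (hc.2 hxc.ne')
    exact h.exists_common_neighbor hyx hne hc6 hc.1 (hcubic hc.1) hxc hcu hxu

end DegreeSeven

end CompleteMinor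

theorem order12_minDegree6_size38_hasK6Minor {V : Type*} [Fintype V] (G : SimpleGraph V)
    (hcard : Fintype.card V = 12) (hdeg : ∀ v : V, 6 ≤ G.degree v)
    (hsize : G.edgeFinset.card = 38) :
    G.HasCompleteMinor 6 := by
  by_contra hminor
  have h : CompleteMinor.IsCounterexample G := ⟨hcard, hdeg, hsize, hminor⟩
  obtain ⟨x, hx, hX⟩ := CompleteMinor.exists_star_or_matching
    h.card_verticesOfDegree_seven h.sum_degreeIn_verticesOfDegree_seven
  obtain ⟨C, hC⟩ := h.exists_isCubicNeighborhood hx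
  obtain ⟨hT, r, hr, hxr⟩ | ⟨p, q, r, hT, hpq, hpr, hxq, hxr, hqr⟩ := hX
  · exact hxr (hC.adj_of_forall_degreeIn_eq_zero hT hr)
  · rw [hT] at hC
    exact hC.not_adj_matching hpq hpr hxq hxr hqr
end

section
/- Every simple graph of order at most 11 with minimum degree at least 6 contains a K_6 minor. -/
attribute [local instance] Classical.propDecidable

/-!
Mader's induction on the order handles graphs with `n ≤ 11` vertices and at least `4 * n - 9` edges:
contracting an edge whose ends have at most three common neighbours preserves the bound, and a
minimal graph with no such edge has a vertex of degree `5` or `6` whose neighbourhood contains a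
`K₅` or an octahedron.

Minimum degree `6` leaves only the `6`-regular graphs with `n ∈ {10, 11}` and the graphs with
`n = 11` and `34` edges. An edge with too few common neighbours is contracted again. If there is
none, then counting the edges around a vertex is tight: for `6`-regular graphs the complement is
strongly regular with parameters `(10, 3, 0, 1)`, which yields the minor, or `(11, 4, 0, 2)`, which
do not occur. The surviving graphs contract to a graph with `10` vertices, `30` edges and a vertex
of degree `5`, to which the counting applies once more.
-/

namespace K6Minor

open SimpleGraph Finset

section Minor

variable {V W X : Type*} {F : SimpleGraph X} {H : SimpleGraph W} {G : SimpleGraph V}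

/-- `H` is a minor of `G`. The branch set `B w` of a vertex `w` of `H` is nonempty because it
induces a connected subgraph. -/
def IsMinor (H : SimpleGraph W) (G : SimpleGraph V) : Prop :=
  ∃ B : W → Set V, (∀ w, (G.induce (B w)).Connected) ∧ (Pairwise fun a b => Disjoint (B a) (B b)) ∧
    ∀ a b, H.Adj a b → ∃ u ∈ B a, ∃ v ∈ B b, G.Adj u v

lemma hasCompleteMinor_iff_isMinor_top {t : ℕ} :
    G.HasCompleteMinor t ↔ IsMinor (⊤ : SimpleGraph (Fin t)) G := by
  constructor
  · rintro ⟨B, -, hB, hdisj, hadj⟩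
    exact ⟨B, hB, hdisj, hadj⟩
  · rintro ⟨B, hB, hdisj, hadj⟩
    exact ⟨B, fun i => Set.nonempty_coe_sort.1 (hB i).nonempty, hB, fun _ _ h => hdisj h, hadj⟩

lemma connected_induce_singleton (v : V) : (G.induce {v}).Connected :=
  { preconnected := .of_subsingleton }

lemma connected_induce_of_isClique {s : Set V} (hs : G.IsClique s) (hne : s.Nonempty) :
    (G.induce s).Connected := by
  obtain ⟨v, hv⟩ := hne
  refine induce_connected_of_patches v hv fun {u} hu => ⟨{v, u}, ?_, by simp, by simp, ?_⟩
  · rintro _ (rfl | rfl) <;> assumption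
  · rcases eq_or_ne v u with rfl | h
    · exact .rfl
    · exact (induce_pair_connected_of_adj (hs hv hu h)).preconnected _ _

lemma connected_induce_insert {u : V} {A : Set V} (hA : (G.induce A).Connected)
    (hu : ∃ a ∈ A, G.Adj u a) : (G.induce (insert u A)).Connected := by
  obtain ⟨a, ha, hua⟩ := hu
  rw [Set.insert_eq]
  exact connected_induce_union (connected_induce_singleton u).preconnected hA.preconnected
    (Set.mem_singleton u) ha hua

lemma connected_induce_biUnion {S : Set W} {B : W → Set V} (hS : (H.induce S).Connected)
    (hB : ∀ w ∈ S, (G.induce (B w)).Connected)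
    (hadj : ∀ a ∈ S, ∀ b ∈ S, H.Adj a b → ∃ u ∈ B a, ∃ v ∈ B b, G.Adj u v) :
    (G.induce (⋃ w ∈ S, B w)).Connected := by
  have hsub : ∀ w ∈ S, B w ⊆ ⋃ w ∈ S, B w := fun w hw => Set.subset_biUnion_of_mem hw
  have within : ∀ (w : W) (hw : w ∈ S) (u v : V) (hu : u ∈ B w) (hv : v ∈ B w),
      (G.induce (⋃ w ∈ S, B w)).Reachable ⟨u, hsub w hw hu⟩ ⟨v, hsub w hw hv⟩ :=
    fun w hw u v hu hv =>
      ((hB w hw).preconnected ⟨u, hu⟩ ⟨v, hv⟩).map (G.induceHomOfLE (hsub w hw)).toHom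
  have along : ∀ a b : S, (H.induce S).Walk a b → ∀ (u v : V) (hu : u ∈ B a) (hv : v ∈ B b),
      (G.induce (⋃ w ∈ S, B w)).Reachable ⟨u, hsub a a.2 hu⟩ ⟨v, hsub b b.2 hv⟩ := by
    intro a b p
    induction p with
    | nil => exact within _ (Subtype.prop _)
    | @cons a c b hac _ ih =>
      intro u v hu hv
      obtain ⟨u', hu', w, hw, huw⟩ := hadj a a.2 c c.2 hac
      have step : (G.induce (⋃ w ∈ S, B w)).Adj ⟨u', hsub a a.2 hu'⟩ ⟨w, hsub c c.2 hw⟩ := huw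
      exact ((within a a.2 u u' hu hu').trans step.reachable).trans (ih w v hw hv)
  obtain ⟨a⟩ := hS.nonempty
  obtain ⟨u⟩ := (hB a a.2).nonempty
  refine (connected_iff_exists_forall_reachable _).2 ⟨⟨u, hsub a a.2 u.2⟩, fun ⟨v, hv⟩ => ?_⟩
  obtain ⟨b, hb, hvb⟩ := Set.mem_iUnion₂.1 hv
  obtain ⟨p⟩ := hS.preconnected a ⟨b, hb⟩
  exact along a ⟨b, hb⟩ p u v u.2 hvb

lemma IsMinor.trans (hF : IsMinor F H) (hH : IsMinor H G) : IsMinor F G := by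
  obtain ⟨A, hA, hAdisj, hAadj⟩ := hF
  obtain ⟨B, hB, hBdisj, hBadj⟩ := hH
  refine ⟨fun i => ⋃ w ∈ A i, B w, fun i => ?_, fun i j hij => ?_, fun i j hij => ?_⟩
  · exact connected_induce_biUnion (hA i) (fun w _ => hB w) fun a _ b _ => hBadj a b
  · simp only [Set.disjoint_iUnion_left, Set.disjoint_iUnion_right]
    exact fun a ha b hb => hBdisj ((hAdisj hij).ne_of_mem hb ha)
  · obtain ⟨a, ha, b, hb, hab⟩ := hAadj i j hij
    obtain ⟨u, hu, v, hv, huv⟩ := hBadj a b hab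
    exact ⟨u, Set.mem_biUnion ha hu, v, Set.mem_biUnion hb hv, huv⟩

lemma IsMinor.hasCompleteMinor {t : ℕ} (hH : IsMinor H G) (h : H.HasCompleteMinor t) :
    G.HasCompleteMinor t :=
  hasCompleteMinor_iff_isMinor_top.2 ((hasCompleteMinor_iff_isMinor_top.1 h).trans hH)

lemma isMinor_of_injective (f : H →g G) (hf : Function.Injective f) : IsMinor H G :=
  ⟨fun w => {f w}, fun w => connected_induce_singleton _, fun _ _ h => by simpa using hf.ne h,
    fun a b h => ⟨f a, rfl, f b, rfl, f.map_adj h⟩⟩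

lemma isMinor_map {f : V → W} (hf : ∀ w, (G.induce (f ⁻¹' {w})).Connected) :
    IsMinor (G.map f) G := by
  refine ⟨fun w => f ⁻¹' {w}, hf, fun a b hab => ?_, fun a b hab => ?_⟩
  · exact Disjoint.preimage f (Set.disjoint_singleton.2 hab)
  · obtain ⟨-, u, v, huv, rfl, rfl⟩ := (map_adj' f G a b).1 hab
    exact ⟨u, rfl, v, rfl, huv⟩

lemma hasCompleteMinor_of_isClique {t : ℕ} {s : Finset V} (hs : G.IsClique s) (ht : t ≤ #s) :
    G.HasCompleteMinor t := by
  obtain ⟨e⟩ : Nonempty (Fin t ↪ s) := Function.Embedding.nonempty_of_card_le (by simpa using ht)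
  let f : (⊤ : SimpleGraph (Fin t)) →g G :=
    ⟨fun i => (e i : V), fun {i j} hij =>
      hs (e i).2 (e j).2 (Subtype.coe_injective.ne (e.injective.ne hij))⟩
  exact hasCompleteMinor_iff_isMinor_top.2
    (isMinor_of_injective f (Subtype.coe_injective.comp e.injective))

lemma hasCompleteMinor_of_pairwise {L : List (Set V)} (hL : ∀ A ∈ L, (G.induce A).Connected)
    (hpair : L.Pairwise fun A B => Disjoint A B ∧ ∃ u ∈ A, ∃ v ∈ B, G.Adj u v) :
    G.HasCompleteMinor L.length := by
  have hlt := List.pairwise_iff_get.1 hpair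
  refine hasCompleteMinor_iff_isMinor_top.2 ⟨L.get, fun i => hL _ (L.get_mem i), ?_, ?_⟩
  · intro i j hij
    rcases lt_or_gt_of_ne hij with h | h
    exacts [(hlt i j h).1, (hlt j i h).1.symm]
  · intro i j hij
    rcases lt_or_gt_of_ne hij with h | h
    · exact (hlt i j h).2
    · obtain ⟨u, hu, v, hv, huv⟩ := (hlt j i h).2
      exact ⟨v, hv, u, hu, huv.symm⟩

end Minor

section Contraction

variable {V : Type*} {G : SimpleGraph V} {x y : V}

/-- Contraction of the edge `xy`: the merged vertex keeps the name `x`, and `y` is removed. -/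
noncomputable def contract (h : G.Adj x y) : SimpleGraph {z // z ≠ y} :=
  G.map fun z => if hz : z = y then ⟨x, h.ne⟩ else ⟨z, hz⟩

lemma isMinor_contract (h : G.Adj x y) : IsMinor (contract h) G := by
  refine isMinor_map fun w => ?_
  refine connected_induce_of_isClique (fun a ha b hb hab => ?_) ⟨w, by simp [w.2]⟩
  have := h.symm
  grind

lemma contract_adj (h : G.Adj x y) {z w : {z // z ≠ y}} :
    (contract h).Adj z w ↔
      z ≠ w ∧ (G.Adj z w ∨ (z : V) = x ∧ G.Adj y w ∨ (w : V) = x ∧ G.Adj y z) := by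
  rw [contract, map_adj']
  refine and_congr_right fun hzw => ⟨?_, ?_⟩
  · rintro ⟨u, v, huv, rfl, rfl⟩
    have := huv.symm
    grind
  · have hz := z.2
    have hw := w.2
    rintro (hadj | ⟨hz', hadj⟩ | ⟨hw', hadj⟩)
    · exact ⟨z, w, hadj, by simp [hz], by simp [hw]⟩
    · exact ⟨y, w, hadj, by simp [← hz'], by simp [hw]⟩
    · exact ⟨z, y, hadj.symm, by simp [hz], by simp [← hw']⟩

variable [Fintype V]

/-- The number of common neighbours of `u` and `v`. -/
noncomputable def codegree (G : SimpleGraph V) (u v : V) : ℕ :=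
  #(G.neighborFinset u ∩ G.neighborFinset v)

lemma codegree_comm (u v : V) : codegree G u v = codegree G v u := by
  rw [codegree, inter_comm, codegree]

lemma card_subtype_ne_add_one (y : V) : Fintype.card {z // z ≠ y} + 1 = Fintype.card V := by
  have := Fintype.sum_eq_add_sum_subtype_ne (fun _ => 1) y
  simp only [sum_const, card_univ, smul_eq_mul, mul_one] at this
  lia

lemma degree_contract_of_ne (h : G.Adj x y) {z : {z // z ≠ y}} (hz : (z : V) ≠ x) :
    (contract h).degree z + (if G.Adj x z ∧ G.Adj y z then 1 else 0) = G.degree z := by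
  have himage : ((contract h).neighborFinset z).map (.subtype _) =
      if G.Adj y z then insert x ((G.neighborFinset z).erase y) else G.neighborFinset z := by
    ext w
    have := G.adj_comm y z
    have := z.2
    by_cases hyz : G.Adj y z <;>
      simp only [mem_map, mem_neighborFinset, contract_adj, hyz, ne_eq, Subtype.ext_iff,
        Function.Embedding.subtype_apply, Subtype.exists, exists_and_left, exists_prop,
        exists_eq_right_right, if_true, if_false, mem_insert, mem_erase] <;>
      grind [SimpleGraph.irrefl]
  rw [← card_neighborFinset_eq_degree, ← card_map (.subtype _), himage,
    ← card_neighborFinset_eq_degree]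
  have := G.adj_comm x z
  have := G.adj_comm y z
  by_cases hyz : G.Adj y z
  · have hmem : y ∈ G.neighborFinset z := by simpa using hyz.symm
    have := card_erase_add_one hmem
    by_cases hxz : G.Adj x z
    · rw [if_pos hyz, insert_eq_of_mem (by simp [hxz.symm, h.ne]), if_pos ⟨hxz, hyz⟩, this]
    · have hx : x ∉ (G.neighborFinset z).erase y := by grind [mem_neighborFinset]
      rw [if_pos hyz, card_insert_of_notMem hx, this, if_neg (by tauto), add_zero]
  · rw [if_neg hyz, if_neg (by tauto), add_zero]

lemma degree_contract_self (h : G.Adj x y) :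
    (contract h).degree ⟨x, h.ne⟩ + codegree G x y + 2 = G.degree x + G.degree y := by
  have himage : ((contract h).neighborFinset ⟨x, h.ne⟩).map (.subtype _) =
      ((G.neighborFinset x ∪ G.neighborFinset y).erase x).erase y := by
    ext w
    simp only [mem_map, mem_neighborFinset, contract_adj, ne_eq, Subtype.ext_iff,
      Function.Embedding.subtype_apply, Subtype.exists, exists_and_left, exists_prop,
      exists_eq_right_right, mem_erase, mem_union]
    grind
  have hx : x ∈ G.neighborFinset x ∪ G.neighborFinset y := by simp [h.symm]
  have hy : y ∈ (G.neighborFinset x ∪ G.neighborFinset y).erase x := by simp [h, h.ne']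
  have hcard := card_union_add_card_inter (G.neighborFinset x) (G.neighborFinset y)
  rw [← card_erase_add_one hx, ← card_erase_add_one hy, ← himage, card_map] at hcard
  simp only [card_neighborFinset_eq_degree] at hcard
  rw [codegree]
  lia

lemma card_edgeFinset_contract (h : G.Adj x y) :
    #(contract h).edgeFinset + codegree G x y + 1 = #G.edgeFinset := by
  have hdeg : ∀ z : {z // z ≠ y}, (contract h).degree z +
      (if G.Adj x z ∧ G.Adj y z then 1 else 0) + (if z = ⟨x, h.ne⟩ then codegree G x y + 2 else 0) =
      G.degree z + if z = ⟨x, h.ne⟩ then G.degree y else 0 := by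
    intro z
    by_cases hz : z = ⟨x, h.ne⟩
    · subst hz
      simpa [add_assoc] using degree_contract_self h
    · simpa [hz] using degree_contract_of_ne h (fun hzx => hz (Subtype.ext hzx))
  have hcommon : ∑ z : {z // z ≠ y}, (if G.Adj x z ∧ G.Adj y z then 1 else 0) = codegree G x y := by
    have := Fintype.sum_eq_add_sum_subtype_ne (fun z => if G.Adj x z ∧ G.Adj y z then 1 else 0) y
    rw [if_neg (by simp), zero_add] at this
    rw [← this, ← card_filter, codegree]
    congr 1
    ext
    simp
  have hsum := sum_congr (rfl : (univ : Finset {z // z ≠ y}) = univ) fun z _ => hdeg z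
  simp only [sum_add_distrib, hcommon, sum_degrees_eq_twice_card_edges, sum_ite_eq', mem_univ,
    if_true] at hsum
  have := G.sum_degrees_eq_twice_card_edges
  rw [Fintype.sum_eq_add_sum_subtype_ne _ y] at this
  lia

end Contraction

section Counting

variable {V : Type*} [Fintype V] {G : SimpleGraph V}

lemma codegree_add_card_inter_compl (u v : V) :
    codegree G u v + #(G.neighborFinset u ∩ Gᶜ.neighborFinset v) + (if G.Adj u v then 1 else 0) =
      G.degree u := by
  have hv : #(G.neighborFinset u ∩ {v}) = if G.Adj u v then 1 else 0 := by
    by_cases h : G.Adj u v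
    · simp [h]
    · simp [h, inter_singleton_of_notMem]
  have hN : G.neighborFinset u = (G.neighborFinset u ∩ G.neighborFinset v) ∪
      (G.neighborFinset u ∩ Gᶜ.neighborFinset v) ∪ (G.neighborFinset u ∩ {v}) := by
    ext w
    simp only [mem_neighborFinset, mem_union, mem_inter, compl_adj, mem_singleton]
    grind [SimpleGraph.irrefl]
  rw [← card_neighborFinset_eq_degree, hN, card_union_of_disjoint, card_union_of_disjoint,
    ← hN, hv, codegree] <;>
    simp only [Finset.disjoint_left, mem_union, mem_inter, mem_neighborFinset, compl_adj,
      mem_singleton] <;>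
    grind [SimpleGraph.irrefl]

lemma degree_add_card_compl (v : V) :
    G.degree v + #(Gᶜ.neighborFinset v) + 1 = Fintype.card V := by
  have := G.degree_compl v
  have := G.degree_lt_card_verts v
  rw [card_neighborFinset_eq_degree]
  lia

lemma sum_degree_add_mul_card_le {d : ℕ} (hd : ∀ v, d ≤ G.degree v) (S : Finset V) :
    ∑ v ∈ S, G.degree v + d * Fintype.card V ≤ 2 * #G.edgeFinset + d * #S := by
  have hcompl : d * #Sᶜ ≤ ∑ v ∈ Sᶜ, G.degree v := by
    simpa [mul_comm] using card_nsmul_le_sum Sᶜ (fun v => G.degree v) d fun v _ => hd v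
  rw [← G.sum_degrees_eq_twice_card_edges, ← sum_add_sum_compl S, ← card_add_card_compl S, mul_add]
  lia

lemma isRegularOfDegree_of_card_edgeFinset_le {d : ℕ} (hd : ∀ v, d ≤ G.degree v)
    (h : 2 * #G.edgeFinset ≤ d * Fintype.card V) : G.IsRegularOfDegree d := by
  intro v
  have := sum_degree_add_mul_card_le hd {v}
  rw [sum_singleton, card_singleton] at this
  have := hd v
  lia

lemma sum_card_inter_comm (S T : Finset V) :
    ∑ u ∈ S, #(G.neighborFinset u ∩ T) = ∑ u ∈ T, #(G.neighborFinset u ∩ S) := by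
  convert sum_card_bipartiteAbove_eq_sum_card_bipartiteBelow (s := S) (t := T) G.Adj using 3
  · ext; simp [bipartiteAbove, and_comm]
  · ext; simp [bipartiteBelow, and_comm, G.adj_comm]

lemma sum_eq_self_add_sum_add_sum_compl (f : V → ℕ) (v : V) :
    ∑ u, f u = f v + ∑ u ∈ G.neighborFinset v, f u + ∑ u ∈ Gᶜ.neighborFinset v, f u := by
  have hV : (univ : Finset V) =
      insert v (G.neighborFinset v ∪ Gᶜ.neighborFinset v) := by
    ext u
    simp only [mem_univ, mem_insert, mem_union, mem_neighborFinset, compl_adj, true_iff]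
    grind
  have hdisj : Disjoint (G.neighborFinset v) (Gᶜ.neighborFinset v) :=
    Finset.disjoint_left.2 fun u hu hu' => by simp_all
  rw [hV, sum_insert (by simp), sum_union hdisj, add_assoc]

lemma two_mul_sum_degree_add_sum_card_compl (v : V) :
    2 * ∑ u ∈ G.neighborFinset v, G.degree u +
        ∑ m ∈ Gᶜ.neighborFinset v, #(G.neighborFinset m ∩ Gᶜ.neighborFinset v) =
      2 * #G.edgeFinset + ∑ u ∈ G.neighborFinset v, codegree G u v := by
  have htotal := sum_eq_self_add_sum_add_sum_compl (G := G) (fun u => G.degree u) v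
  have hN : ∑ u ∈ G.neighborFinset v, G.degree u = ∑ u ∈ G.neighborFinset v, codegree G u v +
      ∑ u ∈ G.neighborFinset v, #(G.neighborFinset u ∩ Gᶜ.neighborFinset v) + G.degree v := by
    rw [← card_neighborFinset_eq_degree, card_eq_sum_ones, ← sum_add_distrib, ← sum_add_distrib]
    refine sum_congr rfl fun u hu => ?_
    rw [← codegree_add_card_inter_compl u v, if_pos ((G.mem_neighborFinset v u).1 hu).symm]
  have hM : ∑ m ∈ Gᶜ.neighborFinset v, G.degree m = ∑ m ∈ Gᶜ.neighborFinset v, codegree G m v +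
      ∑ m ∈ Gᶜ.neighborFinset v, #(G.neighborFinset m ∩ Gᶜ.neighborFinset v) := by
    rw [← sum_add_distrib]
    refine sum_congr rfl fun m hm => ?_
    rw [← codegree_add_card_inter_compl m v, if_neg fun h => ?_, add_zero]
    exact ((Gᶜ.mem_neighborFinset v m).1 hm).2 h.symm
  have hcross : ∑ m ∈ Gᶜ.neighborFinset v, codegree G m v =
      ∑ u ∈ G.neighborFinset v, #(G.neighborFinset u ∩ Gᶜ.neighborFinset v) :=
    sum_card_inter_comm _ _
  rw [sum_degrees_eq_twice_card_edges] at htotal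
  lia

lemma card_neighborFinset_inter_lt {S : Finset V} {v : V} (hv : v ∈ S) :
    #(G.neighborFinset v ∩ S) < #S :=
  card_lt_card ⟨inter_subset_right, fun h => by simpa using h hv⟩

lemma sum_card_neighborFinset_inter_le (S : Finset V) :
    ∑ v ∈ S, #(G.neighborFinset v ∩ S) ≤ #S * (#S - 1) := by
  rw [← smul_eq_mul]
  exact sum_le_card_nsmul _ _ _ fun v hv => Nat.le_sub_one_of_lt (card_neighborFinset_inter_lt hv)

lemma isClique_of_le_sum_card {S : Finset V}
    (h : #S * (#S - 1) ≤ ∑ v ∈ S, #(G.neighborFinset v ∩ S)) : G.IsClique S := by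
  have hle : ∀ v ∈ S, #(G.neighborFinset v ∩ S) ≤ #S - 1 :=
    fun v hv => Nat.le_sub_one_of_lt (card_neighborFinset_inter_lt hv)
  have heq := (sum_eq_sum_iff_of_le hle).1 <| le_antisymm (sum_le_sum hle) (by simpa using h)
  intro u hu w hw huw
  have hsub : G.neighborFinset u ∩ S ⊆ S.erase u := fun z hz => by
    have hadj : G.Adj u z := by simpa using (mem_inter.1 hz).1
    exact mem_erase.2 ⟨hadj.ne', (mem_inter.1 hz).2⟩
  have := eq_of_subset_of_card_le hsub (by rw [card_erase_of_mem hu, heq u hu])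
  simpa using (mem_inter.1 (this ▸ mem_erase.2 ⟨huw.symm, hw⟩ : w ∈ G.neighborFinset u ∩ S)).1

lemma isClique_compl_and_codegree_eq {v : V} {ℓ : V → ℕ}
    (hℓ : ∀ u, G.Adj v u → ℓ u ≤ codegree G u v)
    (h : 2 * ∑ u ∈ G.neighborFinset v, G.degree u +
        #(Gᶜ.neighborFinset v) * (#(Gᶜ.neighborFinset v) - 1) ≤
      2 * #G.edgeFinset + ∑ u ∈ G.neighborFinset v, ℓ u) :
    G.IsClique (Gᶜ.neighborFinset v) ∧ ∀ u, G.Adj v u → codegree G u v = ℓ u := by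
  have hcount := two_mul_sum_degree_add_sum_card_compl (G := G) v
  have hX := sum_card_neighborFinset_inter_le (G := G) (Gᶜ.neighborFinset v)
  have hle : ∀ u ∈ G.neighborFinset v, ℓ u ≤ codegree G u v :=
    fun u hu => hℓ u (by simpa using hu)
  have hsum := sum_le_sum hle
  refine ⟨isClique_of_le_sum_card (by lia), fun u hu => ?_⟩
  exact ((sum_eq_sum_iff_of_le hle).1 (by lia) u (by simpa using hu)).symm

lemma card_commonNeighbors_eq_codegree (u v : V) :
    Fintype.card (G.commonNeighbors u v) = codegree G u v := by
  rw [codegree, ← Set.toFinset_card]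
  congr 1
  ext
  simp [mem_commonNeighbors]

lemma isSRGWith_of_le_codegree {d m ℓ : ℕ} (hcard : Fintype.card V = d + m + 2)
    (hd : G.IsRegularOfDegree d) (hℓ : ∀ u v, G.Adj u v → ℓ ≤ codegree G u v)
    (h : d * d + (m + 1) * m ≤ d * (m + 2 + ℓ)) : G.IsSRGWith (d + m + 2) d ℓ (d - m) := by
  have hM (v : V) : #(Gᶜ.neighborFinset v) = m + 1 := by
    have := degree_add_card_compl (G := G) v
    have := hd v
    lia
  have tight (v : V) : G.IsClique (Gᶜ.neighborFinset v) ∧ ∀ u, G.Adj v u → codegree G u v = ℓ := by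
    refine isClique_compl_and_codegree_eq (ℓ := fun _ => ℓ) (fun u hu => hℓ u v hu.symm) ?_
    have hedges := G.sum_degrees_eq_twice_card_edges
    simp only [hd.degree_eq, sum_const, card_univ, hcard, smul_eq_mul, hM,
      card_neighborFinset_eq_degree] at hedges ⊢
    rw [← hedges, add_tsub_cancel_right]
    linarith
  refine ⟨hcard, hd, fun v w hvw => ?_, fun v w hvw hadj => ?_⟩
  · rw [card_commonNeighbors_eq_codegree, (tight w).2 v hvw.symm]
  · rw [card_commonNeighbors_eq_codegree]
    have hcount := codegree_add_card_inter_compl (G := G) v w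
    have hvM : v ∈ Gᶜ.neighborFinset w := by simpa [G.adj_comm w v] using ⟨hvw.symm, hadj⟩
    have hinter : G.neighborFinset v ∩ Gᶜ.neighborFinset w = (Gᶜ.neighborFinset w).erase v := by
      ext z
      simp only [mem_inter, mem_erase, mem_neighborFinset]
      refine and_congr_left fun hz => ⟨Adj.ne', fun hzv => (tight w).1 hvM ?_ hzv.symm⟩
      simpa using hz
    rw [hinter, card_erase_of_mem hvM, hM, if_neg hadj, hd.degree_eq] at hcount
    lia

end Counting

section Pairing

variable {V : Type*} {G : SimpleGraph V} {S : Finset V} {k : ℕ} {p : Fin k → Bool → V}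

/-- The pairs `p i true`, `p i false` are disjoint and contained in `S`, and every vertex of `S` is
adjacent to both vertices of each pair it does not belong to. Thus `p` exhibits an octahedron of
dimension `k` in `S`. -/
structure IsPairing (G : SimpleGraph V) (S : Finset V) {k : ℕ} (p : Fin k → Bool → V) : Prop where
  injective : Function.Injective2 p
  mem : ∀ i s, p i s ∈ S
  adj : ∀ i s, ∀ z ∈ S, (∀ t, z ≠ p i t) → G.Adj (p i s) z

lemma IsPairing.adj_of_ne (hp : IsPairing G S p) {i j : Fin k} (hij : i ≠ j) (s t : Bool) :
    G.Adj (p i s) (p j t) :=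
  hp.adj i s _ (hp.mem j t) fun _ h => hij (hp.injective h).1.symm

lemma IsPairing.isClique_image (hp : IsPairing G S p) (s : Fin k → Bool) :
    G.IsClique (univ.image fun i => p i (s i)) := by
  simp only [coe_image, coe_univ, Set.image_univ]
  rintro _ ⟨i, rfl⟩ _ ⟨j, rfl⟩ hij
  exact hp.adj_of_ne (fun h => hij (by rw [h])) _ _

lemma IsPairing.exists_eq (hp : IsPairing G S p) (hS : #S = 2 * k) {z : V} (hz : z ∈ S) :
    ∃ i s, p i s = z := by
  have himage : univ.image (Function.uncurry p) = S := by
    refine eq_of_subset_of_card_le (by simpa [image_subset_iff] using hp.mem) ?_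
    rw [card_image_of_injective _ hp.injective.uncurry, hS]
    simp [mul_comm]
  simpa [← himage] using hz

lemma IsPairing.exists_mem_forall_adj (hp : IsPairing G S p) (hS : 2 * k < #S) :
    ∃ z ∈ S, ∀ i s, G.Adj z (p i s) := by
  obtain ⟨z, hz, hzp⟩ := exists_mem_notMem_of_card_lt_card
    (show #(univ.image (Function.uncurry p)) < #S from
      card_image_le.trans_lt (by simpa [mul_comm] using hS))
  have hne : ∀ i s, z ≠ p i s := fun i s h => hzp (mem_image.2 ⟨(i, s), mem_univ _, h.symm⟩)
  exact ⟨z, hz, fun i s => (hp.adj i s z hz (hne i)).symm⟩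

lemma IsPairing.inter_subset_image (hp : IsPairing G S p) (hS : #S = 2 * k) {T : Finset V}
    {s : Fin k → Bool} (hs : ∀ i, p i (s i) ∉ T) :
    T ∩ S ⊆ univ.image fun i => p i (!s i) := by
  intro z hz
  obtain ⟨i, t, rfl⟩ := hp.exists_eq hS (mem_inter.1 hz).2
  have hts : t ≠ s i := by
    rintro rfl
    exact hs i (mem_inter.1 hz).1
  exact mem_image.2 ⟨i, mem_univ i, by rw [Bool.eq_not.2 hts]⟩

lemma IsPairing.cons {a b : V} (ha : a ∈ S) (hb : b ∈ S) (hab : a ≠ b)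
    (hadj : ∀ z ∈ S, z ≠ a → z ≠ b → G.Adj a z ∧ G.Adj b z)
    (hp : IsPairing G ((S.erase a).erase b) p) :
    IsPairing G S (Fin.cons (fun s => bif s then a else b) p : Fin (k + 1) → Bool → V) := by
  have hmem : ∀ i s, p i s ≠ b ∧ p i s ≠ a ∧ p i s ∈ S := by simpa using hp.mem
  refine ⟨fun i j s t h => ?_, fun i s => ?_, fun i s z hz hne => ?_⟩
  · cases i using Fin.cases <;> cases j using Fin.cases <;> cases s <;> cases t <;>
      simp only [Fin.cons_zero, Fin.cons_succ, cond_true, cond_false] at h <;>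
      grind [hp.injective.eq_iff]
  · cases i using Fin.cases <;> cases s <;> simp [ha, hb, hmem]
  · cases i using Fin.cases with
    | zero =>
      have hza : z ≠ a := hne true
      have hzb : z ≠ b := hne false
      cases s
      exacts [(hadj z hz hza hzb).2, (hadj z hz hza hzb).1]
    | succ i =>
      obtain ⟨hib, hia, hi⟩ := hmem i s
      by_cases hza : z = a
      · exact hza ▸ (hadj _ hi hia hib).1.symm
      by_cases hzb : z = b
      · exact hzb ▸ (hadj _ hi hia hib).2.symm
      exact hp.adj i s z (by simp [hza, hzb, hz]) hne

lemma exists_pair_adj_rest [Fintype V] (hS : ∀ m ∈ S, #(Gᶜ.neighborFinset m ∩ S) ≤ 1)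
    (hcard : 1 < #S) :
    ∃ a ∈ S, ∃ b ∈ S, a ≠ b ∧ ∀ z ∈ S, z ≠ a → z ≠ b → G.Adj a z ∧ G.Adj b z := by
  have hunique : ∀ m ∈ S, ∀ u ∈ S, ∀ w ∈ S, Gᶜ.Adj m u → Gᶜ.Adj m w → u = w :=
    fun m hm u hu w hw hmu hmw => card_le_one.1 (hS m hm) u (by simp_all) w (by simp_all)
  by_cases hS : ∃ a ∈ S, ∃ b ∈ S, Gᶜ.Adj a b
  · obtain ⟨a, ha, b, hb, hab⟩ := hS
    refine ⟨a, ha, b, hb, hab.ne, fun z hz hza hzb => ⟨?_, ?_⟩⟩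
    · exact not_not.1 fun h => hzb (hunique a ha z hz b hb ⟨hza.symm, h⟩ hab)
    · exact not_not.1 fun h => hza (hunique b hb z hz a ha ⟨hzb.symm, h⟩ hab.symm)
  · obtain ⟨a, ha, b, hb, hab⟩ := one_lt_card.1 hcard
    have hadj : ∀ u ∈ S, ∀ z ∈ S, z ≠ u → G.Adj u z :=
      fun u hu z hz hzu => not_not.1 fun h => hS ⟨u, hu, z, hz, hzu.symm, h⟩
    exact ⟨a, ha, b, hb, hab, fun z hz hza hzb => ⟨hadj a ha z hz hza, hadj b hb z hz hzb⟩⟩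

lemma exists_isPairing [Fintype V] (hS : ∀ m ∈ S, #(Gᶜ.neighborFinset m ∩ S) ≤ 1)
    (hk : 2 * k ≤ #S) : ∃ p : Fin k → Bool → V, IsPairing G S p := by
  induction k generalizing S with
  | zero => exact ⟨Fin.elim0, fun i => i.elim0, fun i => i.elim0, fun i => i.elim0⟩
  | succ k ih =>
    obtain ⟨a, ha, b, hb, hab, hadj⟩ := exists_pair_adj_rest hS (by lia)
    have hsub : (S.erase a).erase b ⊆ S := (erase_subset _ _).trans (erase_subset _ _)
    have hcard : #((S.erase a).erase b) + 2 = #S := by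
      rw [← card_erase_add_one ha, ← card_erase_add_one (mem_erase.2 ⟨hab.symm, hb⟩)]
    obtain ⟨p, hp⟩ := ih (fun m hm =>
      (card_le_card (inter_subset_inter_left hsub)).trans (hS m (hsub hm))) (by lia)
    exact ⟨_, hp.cons ha hb hab hadj⟩

lemma exists_isPairing_neighborFinset [Fintype V] {v : V}
    (hv : ∀ u, G.Adj v u → G.degree v ≤ codegree G u v + 2) (hk : 2 * k ≤ G.degree v) :
    ∃ p : Fin k → Bool → V, IsPairing G (G.neighborFinset v) p := by
  refine exists_isPairing (fun m hm => ?_) (by simpa using hk)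
  have hm : G.Adj v m := by simpa using hm
  have hcompl := codegree_add_card_inter_compl (G := G) v m
  rw [if_pos hm, inter_comm, codegree_comm] at hcompl
  have := hv m hm
  lia

end Pairing

section Octahedron

variable {V : Type*} [Fintype V] {G : SimpleGraph V} {v : V} {p : Fin 3 → Bool → V}

-- Adding `A` to the branch set of `p i true` supplies the edge missing from the `i`-th pair; one
-- of the other two pairs is merged.
lemma hasCompleteMinor_of_contact (hp : IsPairing G (G.neighborFinset v) p) {A : Set V}
    (hA : (G.induce A).Connected) (hAM : ∀ a ∈ A, a ∈ Gᶜ.neighborFinset v) {i : Fin 3}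
    (hi : ∀ s, ∃ a ∈ A, G.Adj (p i s) a) : G.HasCompleteMinor 6 := by
  obtain ⟨j, l, hij, hil, hjl⟩ : ∃ j l : Fin 3, i ≠ j ∧ i ≠ l ∧ j ≠ l :=
    ⟨i + 1, i + 2, by lia, by lia, by lia⟩
  have hv : ∀ i s, G.Adj v (p i s) := by simpa using hp.mem
  have hout : ∀ a ∈ A, a ≠ v ∧ ∀ i s, a ≠ p i s := fun a ha => by
    have := (Gᶜ.mem_neighborFinset v a).1 (hAM a ha)
    exact ⟨this.ne', fun i s h => this.2 (h ▸ hv i s)⟩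
  have hadj := fun {i j} (h : i ≠ j) s t => hp.adj_of_ne h s t
  refine hasCompleteMinor_of_pairwise (L := [insert (p i true) A, {v}, {p i false}, {p j true},
    {p l true}, {p j false, p l false}]) ?_ ?_
  · simp only [List.forall_mem_cons, List.not_mem_nil, false_imp_iff, implies_true, and_true]
    exact ⟨connected_induce_insert hA (hi true), connected_induce_singleton _,
      connected_induce_singleton _, connected_induce_singleton _, connected_induce_singleton _,
      induce_pair_connected_of_adj (hadj hjl _ _)⟩
  · have hcontact : ∃ a ∈ A, G.Adj a (p i false) := by simpa only [G.adj_comm] using hi false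
    have hA : v ∉ A ∧ ∀ i s, p i s ∉ A :=
      ⟨fun h => (hout v h).1 rfl, fun i s h => (hout _ h).2 i s rfl⟩
    simp [hA, hcontact, hv, (hv _ _).ne, (hv _ _).ne', (hv _ _).symm, hp.injective.eq_iff, hij, hil,
      hjl, hadj hij, hadj hil, hadj hjl, hadj hjl.symm]

lemma card_inter_eq_of_forall_exists_not_adj (hp : IsPairing G (G.neighborFinset v) p)
    (hv : G.degree v = 6) (hcard : Fintype.card V ≤ 11) (hdeg : ∀ u, 6 ≤ G.degree u)
    (hcontact : ∀ w ∈ Gᶜ.neighborFinset v, ∀ i, ∃ s, ¬G.Adj w (p i s)) :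
    ∀ w ∈ Gᶜ.neighborFinset v, #(G.neighborFinset w ∩ G.neighborFinset v) = 3 ∧
      #(Gᶜ.neighborFinset v) = 4 ∧ #(G.neighborFinset w ∩ Gᶜ.neighborFinset v) = 3 := by
  intro w hw
  choose s hs using hcontact w hw
  have hcodegree : #(G.neighborFinset w ∩ G.neighborFinset v) ≤ 3 :=
    (card_le_card (hp.inter_subset_image (by simpa using hv) (by simpa using hs))).trans
      (card_image_le.trans (by simp))
  have hinter := card_neighborFinset_inter_lt (G := G) hw
  have htotal := degree_add_card_compl (G := G) v
  have hsum := codegree_add_card_inter_compl (G := G) w v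
  have hwv : ¬G.Adj w v := fun h => ((Gᶜ.mem_neighborFinset v w).1 hw).2 h.symm
  have := hdeg w
  rw [if_neg hwv, codegree] at hsum
  lia

-- A contact of the non-neighbours of `v` with the octahedron around `v` gives the minor. Otherwise
-- counting makes them a clique, joined to the same three octahedron vertices.
lemma hasCompleteMinor_of_degree_eq_six (hv : G.degree v = 6) (hcard : Fintype.card V ≤ 11)
    (hlarge : 7 < Fintype.card V) (hdeg : ∀ u, 6 ≤ G.degree u)
    (hcodegree : ∀ u, G.Adj v u → 4 ≤ codegree G u v) : G.HasCompleteMinor 6 := by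
  obtain ⟨p, hp⟩ := exists_isPairing_neighborFinset (G := G) (v := v) (k := 3)
    (fun u hu => by have := hcodegree u hu; lia) hv.ge
  by_contra hK
  have contactless : ∀ A : Set V, (G.induce A).Connected → (∀ a ∈ A, a ∈ Gᶜ.neighborFinset v) →
      ∀ i, ∃ s, ∀ a ∈ A, ¬G.Adj a (p i s) := by
    intro A hA hAM i
    by_contra! h
    exact hK (hasCompleteMinor_of_contact hp hA hAM fun s =>
      (h s).imp fun _ ha => ⟨ha.1, ha.2.symm⟩)
  have htight := card_inter_eq_of_forall_exists_not_adj hp hv hcard hdeg fun w hw i =>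
    (contactless {w} (connected_induce_singleton w) (by simpa using hw) i).imp fun s hs => hs w rfl
  obtain ⟨w, hw⟩ : (Gᶜ.neighborFinset v).Nonempty := card_pos.1 <| by
    have := degree_add_card_compl (G := G) v
    lia
  have hclique : G.IsClique (Gᶜ.neighborFinset v) := by
    refine isClique_of_le_sum_card (le_of_eq ?_)
    rw [sum_congr rfl fun w hw => (htight w hw).2.2, sum_const, smul_eq_mul, (htight w hw).2.1]
  choose s hs using contactless _ (connected_induce_of_isClique hclique ⟨w, hw⟩) fun a ha => ha
  have hcommon : ∀ w ∈ Gᶜ.neighborFinset v,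
      G.neighborFinset w ∩ G.neighborFinset v = univ.image fun i => p i (!s i) := by
    intro w hw
    refine eq_of_subset_of_card_le
      (hp.inter_subset_image (by simpa using hv) fun i => by simpa using hs i w hw) ?_
    exact card_image_le.trans (by simp [htight w hw])
  have hunion : G.IsClique
      ((Gᶜ.neighborFinset v ∪ univ.image fun i => p i (!s i) : Finset V) : Set V) := by
    rw [coe_union]
    refine Set.pairwise_union.2 ⟨hclique, hp.isClique_image _, fun w hw z hz _ => ?_⟩
    have hz : z ∈ G.neighborFinset w ∩ G.neighborFinset v := (hcommon w hw).symm ▸ hz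
    have hwz : G.Adj w z := by simpa using (mem_inter.1 hz).1
    exact ⟨hwz, hwz.symm⟩
  refine hK (hasCompleteMinor_of_isClique hunion ?_)
  rw [card_union_of_disjoint, (htight w hw).2.1, ← hcommon w hw, (htight w hw).1]
  · norm_num
  · rw [Finset.disjoint_left, ← hcommon w hw]
    simp +contextual

end Octahedron

section Mader

universe u

lemma hasCompleteMinor_of_degree_eq_five {V : Type*} [Fintype V] {G : SimpleGraph V} {v : V}
    (hv : G.degree v = 5) (hcodegree : ∀ u, G.Adj v u → 4 ≤ codegree G u v) :
    G.HasCompleteMinor 6 := by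
  have hclique : G.IsClique (G.neighborFinset v) := by
    refine isClique_of_le_sum_card ?_
    rw [card_neighborFinset_eq_degree, hv]
    calc 5 * (5 - 1) = ∑ _u ∈ G.neighborFinset v, 4 := by simp [hv]
      _ ≤ ∑ u ∈ G.neighborFinset v, #(G.neighborFinset u ∩ G.neighborFinset v) :=
        sum_le_sum fun u hu => hcodegree u ((G.mem_neighborFinset v u).1 hu)
  refine hasCompleteMinor_of_isClique (s := insert v (G.neighborFinset v)) ?_ ?_
  · rw [coe_insert]
    exact hclique.insert fun u hu _ => by simpa using hu
  · rw [card_insert_of_notMem (by simp), card_neighborFinset_eq_degree, hv]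

lemma exists_degree_le {V : Type*} [Fintype V] {G : SimpleGraph V} {d : ℕ}
    (h : 2 * #G.edgeFinset < (d + 1) * Fintype.card V) : ∃ v, G.degree v ≤ d := by
  by_contra! hd
  have := sum_le_sum fun v (_ : v ∈ univ) => Nat.succ_le_of_lt (hd v)
  rw [sum_degrees_eq_twice_card_edges, sum_const, card_univ, smul_eq_mul] at this
  lia

lemma hasCompleteMinor_of_four_le_codegree {V : Type*} [Fintype V] {G : SimpleGraph V}
    (hcard : Fintype.card V ≤ 11) (hedges : #G.edgeFinset + 9 = 4 * Fintype.card V)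
    (hdeg : ∀ v, 5 ≤ G.degree v) (hcodegree : ∀ u v, G.Adj u v → 4 ≤ codegree G u v) :
    G.HasCompleteMinor 6 := by
  by_cases hfive : ∃ v, G.degree v = 5
  · obtain ⟨v, hv⟩ := hfive
    exact hasCompleteMinor_of_degree_eq_five hv fun u hu => hcodegree u v hu.symm
  have hdeg : ∀ v, 6 ≤ G.degree v := fun v => by
    have := hdeg v
    have : G.degree v ≠ 5 := fun h => hfive ⟨v, h⟩
    lia
  obtain ⟨v, hv⟩ := exists_degree_le (G := G) (d := 6) (by lia)
  have hsum := sum_degree_add_mul_card_le hdeg ∅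
  rw [sum_empty, card_empty] at hsum
  exact hasCompleteMinor_of_degree_eq_six (le_antisymm hv (hdeg v)) hcard (by lia) hdeg
    fun u hu => hcodegree u v hu.symm

lemma exists_le_card_edgeFinset_eq {V : Type*} [Fintype V] {G : SimpleGraph V} {m : ℕ}
    (hm : m ≤ #G.edgeFinset) : ∃ H ≤ G, #H.edgeFinset = m := by
  obtain ⟨s, hs, hcard⟩ := exists_subset_card_eq hm
  have hsG : (s : Set (Sym2 V)) ⊆ G.edgeSet := by simpa [← coe_subset] using hs
  refine ⟨fromEdgeSet s, by simpa using fromEdgeSet_mono hsG, ?_⟩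
  rw [← hcard]
  congr 1
  ext e
  simpa using fun he => G.not_isDiag_of_mem_edgeSet (hsG he)

-- Mader's theorem for `K₆` and small orders.
theorem hasCompleteMinor_of_four_mul_card_le {V : Type u} [Fintype V] {G : SimpleGraph V}
    (hlower : 5 ≤ Fintype.card V) (hupper : Fintype.card V ≤ 11)
    (hedges : 4 * Fintype.card V ≤ #G.edgeFinset + 9) : G.HasCompleteMinor 6 := by
  obtain ⟨n, hn⟩ : ∃ n, n = Fintype.card V := ⟨_, rfl⟩
  induction n using Nat.strong_induction_on generalizing V with
  | _ n ih =>
    have hne : Fintype.card V ≠ 5 := fun h => by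
      have := G.card_edgeFinset_le_card_choose_two
      rw [h, show Nat.choose 5 2 = 10 by decide] at this
      lia
    obtain ⟨H, hHG, hH⟩ :=
      exists_le_card_edgeFinset_eq (show 4 * Fintype.card V - 9 ≤ #G.edgeFinset by lia)
    suffices h : H.HasCompleteMinor 6 from
      (isMinor_of_injective (.ofLE hHG) Function.injective_id).hasCompleteMinor h
    by_cases hcodegree : ∃ x y, H.Adj x y ∧ codegree H x y ≤ 3
    · obtain ⟨x, y, hxy, hle⟩ := hcodegree
      have hcard := card_subtype_ne_add_one y
      have := card_edgeFinset_contract hxy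
      exact (isMinor_contract hxy).hasCompleteMinor
        (ih _ (by lia) (by lia) (by lia) (by lia) rfl)
    by_cases hdeg : ∃ v, H.degree v ≤ 4
    · obtain ⟨v, hv⟩ := hdeg
      have hcard : Fintype.card ({v}ᶜ : Set V) + 1 = Fintype.card V := card_subtype_ne_add_one v
      have hedges : 4 * Fintype.card ({v}ᶜ : Set V) ≤ #(H.induce {v}ᶜ).edgeFinset + 9 := by
        have := H.card_edgeFinset_deleteIncidenceSet v
        rw [← card_edgeFinset_induce_compl_singleton] at this
        lia
      exact (isMinor_of_injective (Embedding.induce {v}ᶜ).toHom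
        Subtype.val_injective).hasCompleteMinor
          (ih _ (by lia) (by lia) (by lia) (by convert hedges) rfl)
    push Not at hcodegree hdeg
    exact hasCompleteMinor_of_four_le_codegree hupper (by lia) hdeg hcodegree

lemma hasCompleteMinor_of_codegree_le {V : Type*} [Fintype V] {G : SimpleGraph V} {x y : V}
    (hxy : G.Adj x y) (hlower : 6 ≤ Fintype.card V) (hupper : Fintype.card V ≤ 12)
    (h : 4 * Fintype.card V + codegree G x y ≤ #G.edgeFinset + 12) : G.HasCompleteMinor 6 := by
  have hcard := card_subtype_ne_add_one y
  have := card_edgeFinset_contract hxy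
  exact (isMinor_contract hxy).hasCompleteMinor
    (hasCompleteMinor_of_four_mul_card_le (by lia) (by lia) (by lia))

end Mader

-- `x i` is joined to `r j k` for `i ∉ {j, k}`, so `{r 0 1, r 1 2, r 2 3}` and
-- `{r 0 2, r 0 3, r 1 3}` complete the `x i` to six branch sets.
lemma hasCompleteMinor_of_clique_four {V : Type*} {G : SimpleGraph V} {x : Fin 4 → V}
    {r : Fin 4 → Fin 4 → V} (hx : ∀ i j, i ≠ j → G.Adj (x i) (x j)) (hcomm : ∀ i j, r i j = r j i)
    (hrx : ∀ i j k, i ≠ j → (G.Adj (r i j) (x k) ↔ i ≠ k ∧ j ≠ k))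
    (hrr : ∀ i j k, [i, j, k].Nodup → G.Adj (r i j) (r i k)) : G.HasCompleteMinor 6 := by
  have hcycle : ∀ i j k, [i, j, k].Nodup → G.Adj (r i j) (r j k) := by
    intro i j k h
    rw [hcomm i j]
    exact hrr j i k (by grind)
  have hne : ∀ i j k, i ≠ j → x k ≠ r i j := by
    intro i j k hij h
    have hl : ∀ l, k ≠ l → i ≠ l ∧ j ≠ l := fun l hkl => (hrx i j l hij).1 (h ▸ hx k l hkl)
    grind
  have hinj : ∀ i j k l, i < j → k < l → i ≠ k ∨ j ≠ l → r i j ≠ r k l := by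
    intro i j k l hij hkl hne h
    have hm : ∀ m, i ≠ m ∧ j ≠ m ↔ k ≠ m ∧ l ≠ m := fun m => by
      rw [← hrx i j m hij.ne, ← hrx k l m hkl.ne, h]
    have := hm i
    have := hm j
    lia
  refine hasCompleteMinor_of_pairwise (L := [{x 0}, {x 1}, {x 2}, {x 3},
    {r 0 1, r 1 2, r 2 3}, {r 0 2, r 0 3, r 1 3}]) ?_ ?_
  · simp only [List.forall_mem_cons, List.not_mem_nil, false_imp_iff, implies_true, and_true]
    refine ⟨connected_induce_singleton _, connected_induce_singleton _,
      connected_induce_singleton _, connected_induce_singleton _, ?_, ?_⟩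
    · exact connected_induce_insert (induce_pair_connected_of_adj (hcycle 1 2 3 (by decide)))
        ⟨r 1 2, by simp, hcycle 0 1 2 (by decide)⟩
    · refine connected_induce_insert (induce_pair_connected_of_adj ?_)
        ⟨r 0 3, by simp, hrr 0 2 3 (by decide)⟩
      exact hcomm 3 1 ▸ hcycle 0 3 1 (by decide)
  · have hxr : ∀ i j k, i ≠ j → (G.Adj (x k) (r i j) ↔ i ≠ k ∧ j ≠ k) := by
      simpa only [G.adj_comm] using hrx
    simp [hx, (hx _ _ _).ne, hne, hxr, hinj, hrr 0 1 2 (by decide)]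

section StronglyRegular

variable {V : Type*} [Fintype V] {H : SimpleGraph V} {n k ℓ μ : ℕ}

lemma not_adj_of_isSRGWith_zero (hH : H.IsSRGWith n k 0 μ) {u v w : V} (hu : H.Adj w u)
    (hv : H.Adj w v) : ¬H.Adj u v := by
  intro h
  have := Fintype.card_eq_zero_iff.1 (hH.of_adj u v h)
  exact this.false ⟨w, hu.symm, hv.symm⟩

lemma exists_forall_adj_iff_eq (hH : H.IsSRGWith n k ℓ 1) {u v : V} (huv : u ≠ v)
    (h : ¬H.Adj u v) : ∃ w, ∀ z, H.Adj u z ∧ H.Adj v z ↔ z = w := by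
  obtain ⟨⟨w, hw⟩, hunique⟩ := Fintype.card_eq_one_iff.1 (hH.of_not_adj huv h)
  exact ⟨w, fun z => ⟨fun hz => congrArg Subtype.val (hunique ⟨z, hz⟩), fun hz => hz ▸ hw⟩⟩

lemma exists_injective_not_adj (hH : H.IsSRGWith 10 3 0 1) :
    ∃ x : Fin 4 → V, Function.Injective x ∧ ∀ i j, ¬H.Adj (x i) (x j) := by
  obtain ⟨v⟩ : Nonempty V := Fintype.card_pos_iff.1 (by simp [hH.card])
  have hdeg : Hᶜ.degree v = 6 := hH.compl_is_regular v
  obtain ⟨w, hvw⟩ : ∃ w, Hᶜ.Adj v w := (degree_pos_iff_exists_adj ..).1 (by lia)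
  have hcommon : 2 < #(Hᶜ.commonNeighbors v w).toFinset := by
    rw [Set.toFinset_card, hH.card_commonNeighbors_eq_of_adj_compl hvw]
    norm_num
  obtain ⟨a, ha, b, hb, c, hc, hab, hac, hbc⟩ := two_lt_card.1 hcommon
  obtain ⟨y, z, hy, hz, hyz⟩ :
      ∃ y z, y ∈ Hᶜ.commonNeighbors v w ∧ z ∈ Hᶜ.commonNeighbors v w ∧ Hᶜ.Adj y z := by
    by_contra! h
    simp only [Set.mem_toFinset, compl_adj] at ha hb hc h
    have hab' := not_not.1 fun hn => h a b ha hb ⟨hab, hn⟩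
    have hac' := not_not.1 fun hn => h a c ha hc ⟨hac, hn⟩
    exact h b c hb hc ⟨hbc, not_adj_of_isSRGWith_zero hH hab' hac'⟩
  have hpair : ∀ i j : Fin 4, i < j → Hᶜ.Adj (![v, w, y, z] i) (![v, w, y, z] j) := by
    rw [mem_commonNeighbors] at hy hz
    simp [Fin.forall_fin_succ, hvw, hy, hz, hyz, -compl_adj]
  have hadj : ∀ i j : Fin 4, i ≠ j → Hᶜ.Adj (![v, w, y, z] i) (![v, w, y, z] j) := fun i j hij =>
    hij.lt_or_gt.elim (hpair i j) fun h => (hpair j i h).symm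
  refine ⟨![v, w, y, z], fun i j h => ?_, fun i j h => ?_⟩
  · exact not_not.1 fun hij => (hadj i j hij).ne h
  · exact (hadj i j fun hij => h.ne (by rw [hij])).2 h

lemma card_filter_adj_le_two (hH : H.IsSRGWith n 3 ℓ 1) {x : Fin 4 → V}
    (hx : Function.Injective x) (hind : ∀ i j, ¬H.Adj (x i) (x j)) (z : V) :
    #{i | H.Adj z (x i)} ≤ 2 := by
  by_contra! hcard
  have hsub : ({i | H.Adj z (x i)} : Finset (Fin 4)).image x ⊆ H.neighborFinset z := by
    simp +contextual [image_subset_iff]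
  have hdeg : #(H.neighborFinset z) = 3 := hH.regular z
  have hle := card_le_card hsub
  rw [card_image_of_injective _ hx, hdeg] at hle
  have heq := eq_of_subset_of_card_le hsub (by rw [card_image_of_injective _ hx]; lia)
  have hN : ∀ w, H.Adj z w → ∃ i, x i = w := fun w hw => by
    have := (H.mem_neighborFinset z w).2 hw
    rw [← heq] at this
    grind
  obtain ⟨l, hl⟩ : ∃ l, ¬H.Adj z (x l) := by
    by_contra! h
    simp [h] at hle
  have hzl : z ≠ x l := by
    rintro rfl
    simp [hind] at hcard
  obtain ⟨w, hw⟩ := exists_forall_adj_iff_eq hH hzl hl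
  obtain ⟨hzw, hlw⟩ := (hw w).2 rfl
  obtain ⟨i, rfl⟩ := hN w hzw
  exact hind l i hlw

lemma hasCompleteMinor_compl_of_isSRGWith_ten (hH : H.IsSRGWith 10 3 0 1) :
    Hᶜ.HasCompleteMinor 6 := by
  obtain ⟨x, hx, hind⟩ := exists_injective_not_adj hH
  have : Nonempty V := ⟨x 0⟩
  choose! r hr using fun i j (hij : i ≠ j) =>
    exists_forall_adj_iff_eq hH (hx.ne hij) (hind i j)
  have hadj : ∀ i j, i ≠ j → H.Adj (x i) (r i j) ∧ H.Adj (x j) (r i j) :=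
    fun i j hij => (hr i j hij _).2 rfl
  have hthree : ∀ z i j k, [i, j, k].Nodup → H.Adj (x i) z → H.Adj (x j) z → ¬H.Adj (x k) z := by
    intro z i j k hijk hi hj hk
    refine (card_filter_adj_le_two hH hx hind z).not_gt (two_lt_card_iff.2 ⟨i, j, k, ?_⟩)
    simp_all [H.adj_comm]
  refine hasCompleteMinor_of_clique_four (x := x) (r := r) (fun i j hij => ⟨hx.ne hij, hind i j⟩)
    (fun i j => ?_) (fun i j k hij => ⟨fun h => ?_, fun h => ?_⟩) fun i j k h => ⟨fun heq => ?_, ?_⟩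
  · by_cases hij : i = j
    · rw [hij]
    · exact (hr j i (Ne.symm hij) _).1 (hadj i j hij).symm
  · have := hadj i j hij
    exact ⟨fun h' => h.2 (h' ▸ this.1.symm), fun h' => h.2 (h' ▸ this.2.symm)⟩
  · refine ⟨fun heq => hind i k (heq ▸ (hadj i j hij).1), fun hk => ?_⟩
    exact hthree _ i j k (by simp [hij, h]) (hadj i j hij).1 (hadj i j hij).2 hk.symm
  · have hij : i ≠ j := by grind
    have hik : i ≠ k := by grind
    exact hthree _ i j k h (hadj i j hij).1 (hadj i j hij).2 (heq ▸ (hadj i k hik).2)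
  · have hij : i ≠ j := by grind
    have hik : i ≠ k := by grind
    exact not_adj_of_isSRGWith_zero hH (hadj i j hij).1 (hadj i k hik).1

lemma hasCompleteMinor_of_isRegularOfDegree_ten {G : SimpleGraph V} (hcard : Fintype.card V = 10)
    (hd : G.IsRegularOfDegree 6) : G.HasCompleteMinor 6 := by
  have hedges := G.sum_degrees_eq_twice_card_edges
  rw [sum_congr rfl fun v _ => hd v, sum_const, card_univ, smul_eq_mul, hcard] at hedges
  by_cases hcodegree : ∃ u v, G.Adj u v ∧ codegree G u v ≤ 2
  · obtain ⟨u, v, huv, hle⟩ := hcodegree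
    exact hasCompleteMinor_of_codegree_le huv (by lia) (by lia) (by lia)
  push Not at hcodegree
  have hG := isSRGWith_of_le_codegree (m := 2) (ℓ := 3) hcard hd hcodegree (by norm_num)
  rw [← compl_compl G]
  exact hasCompleteMinor_compl_of_isSRGWith_ten (by convert hG.compl)

lemma codegree_eq_of_isSRGWith (hH : H.IsSRGWith n k ℓ μ) {u v : V} (huv : u ≠ v)
    (h : ¬H.Adj u v) : codegree H u v = μ := by
  rw [← card_commonNeighbors_eq_codegree, hH.of_not_adj huv h]

lemma card_neighborFinset_sdiff (hH : H.IsSRGWith n k ℓ μ) {u v : V} (huv : u ≠ v)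
    (h : ¬H.Adj u v) : #(H.neighborFinset u \ H.neighborFinset v) + μ = k := by
  rw [← codegree_eq_of_isSRGWith hH huv h, codegree, card_sdiff_add_card_inter,
    card_neighborFinset_eq_degree, hH.regular u]

lemma neighborFinset_inter_eq_sdiff (hH : H.IsSRGWith n 4 0 2) {u v y : V} (huv : u ≠ v)
    (h : ¬H.Adj u v) (hvy : H.Adj v y) (huy : ¬H.Adj u y) :
    H.neighborFinset y ∩ H.neighborFinset u = H.neighborFinset u \ H.neighborFinset v := by
  have hyu : y ≠ u := by
    rintro rfl
    exact h hvy.symm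
  have hinter := codegree_eq_of_isSRGWith hH hyu fun h => huy h.symm
  have hsdiff := card_neighborFinset_sdiff hH huv h
  refine eq_of_subset_of_card_le (fun z hz => ?_) (by rw [← codegree]; lia)
  simp only [mem_inter, mem_sdiff, mem_neighborFinset] at hz ⊢
  exact ⟨hz.2, fun hvz => not_adj_of_isSRGWith_zero hH hvy hvz hz.1⟩

-- Two neighbours `u`, `v` of a vertex have two private neighbours each. Those of `u` are joined to
-- those of `v`, so they have three common neighbours.
lemma not_isSRGWith_four_zero_two [Nonempty V] : ¬H.IsSRGWith n 4 0 2 := by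
  intro hH
  obtain ⟨w⟩ := ‹Nonempty V›
  obtain ⟨u, hu, v, hv, huv⟩ := one_lt_card.1
    (show 1 < #(H.neighborFinset w) by simp [(hH.regular w : H.degree w = 4)])
  rw [mem_neighborFinset] at hu hv
  have hnot := not_adj_of_isSRGWith_zero hH hu hv
  have hnot' : ¬H.Adj v u := fun h => hnot h.symm
  obtain ⟨s, hs, t, ht, hst⟩ := one_lt_card.1
    (show 1 < #(H.neighborFinset u \ H.neighborFinset v) by
      have := card_neighborFinset_sdiff hH huv hnot
      lia)
  obtain ⟨y, hy, z, hz, hyz⟩ := one_lt_card.1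
    (show 1 < #(H.neighborFinset v \ H.neighborFinset u) by
      have := card_neighborFinset_sdiff hH huv.symm hnot'
      lia)
  have hcross : ∀ a ∈ H.neighborFinset u \ H.neighborFinset v,
      ∀ b ∈ H.neighborFinset v \ H.neighborFinset u, H.Adj a b := by
    intro a ha b hb
    simp only [mem_sdiff, mem_neighborFinset] at hb
    rw [← neighborFinset_inter_eq_sdiff hH huv hnot hb.1 hb.2, mem_inter, mem_neighborFinset] at ha
    exact ha.1.symm
  have hsy := hcross s hs y hy
  have hsz := hcross s hs z hz
  have hty := hcross t ht y hy
  have htz := hcross t ht z hz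
  simp only [mem_sdiff, mem_neighborFinset] at hs ht hy hz
  have hcodegree := codegree_eq_of_isSRGWith hH hst (not_adj_of_isSRGWith_zero hH hs.1 ht.1)
  refine hcodegree.not_gt (two_lt_card_iff.2 ⟨u, y, z, ?_⟩)
  have huy : u ≠ y := fun h => hnot' (h ▸ hy.1)
  have huz : u ≠ z := fun h => hnot' (h ▸ hz.1)
  simp [hs.1.symm, ht.1.symm, hsy, hsz, hty, htz, huy, huz, hyz]

lemma exists_codegree_le_two {G : SimpleGraph V} (hcard : Fintype.card V = 11)
    (hd : G.IsRegularOfDegree 6) : ∃ u v, G.Adj u v ∧ codegree G u v ≤ 2 := by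
  by_contra! hcodegree
  have : Nonempty V := Fintype.card_pos_iff.1 (by lia)
  have hG := isSRGWith_of_le_codegree (m := 3) (ℓ := 3) hcard hd hcodegree (by norm_num)
  exact not_isSRGWith_four_zero_two (H := Gᶜ) (by convert hG.compl)

end StronglyRegular

section DegreeFive

lemma exists_subset_union_inter_nonempty {α : Type*} {P P' Q Q' : Finset α} (hP : 1 < #P)
    (hP' : 1 < #P') (hQ : 1 < #Q) (hQ' : 1 < #Q') :
    ∃ A ⊆ P ∪ P', (P ∩ A).Nonempty ∧ (P' ∩ A).Nonempty ∧ (Q \ A).Nonempty ∧ (Q' \ A).Nonempty := by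
  by_cases hdisj : Disjoint P P'
  · obtain ⟨a, ha, b, hb, hab⟩ := one_lt_card.1 hP
    obtain ⟨c, hc, d, hd, hcd⟩ := one_lt_card.1 hP'
    by_contra! hA
    have hcover : ∀ x ∈ P, ∀ y ∈ P', Q ⊆ {x, y} ∨ Q' ⊆ {x, y} := by
      intro x hx y hy
      refine or_iff_not_imp_left.2 fun hsub => sdiff_eq_empty_iff_subset.1 (hA {x, y} ?_ ?_ ?_ ?_)
      · exact insert_subset (mem_union_left _ hx) (singleton_subset_iff.2 (mem_union_right _ hy))
      · exact ⟨x, by simp [hx]⟩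
      · exact ⟨y, by simp [hy]⟩
      · exact sdiff_nonempty.2 hsub
    have hac := hcover a ha c hc
    have had := hcover a ha d hd
    have hbc := hcover b hb c hc
    obtain ⟨q, hq, r, hr, hqr⟩ := one_lt_card.1 hQ
    obtain ⟨q', hq', r', hr', hqr'⟩ := one_lt_card.1 hQ'
    simp only [subset_iff, mem_insert, mem_singleton] at hac had hbc
    grind [Finset.disjoint_left]
  · obtain ⟨a, ha, ha'⟩ := not_disjoint_iff.1 hdisj
    refine ⟨{a}, by simp [ha], ⟨a, by simp [ha]⟩, ⟨a, by simp [ha']⟩, ?_, ?_⟩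
    · exact sdiff_nonempty.2 fun h => (card_le_card h).not_gt hQ
    · exact sdiff_nonempty.2 fun h => (card_le_card h).not_gt hQ'

variable {V : Type*} [Fintype V] {G : SimpleGraph V} {r v : V} {p : Fin 2 → Bool → V}

-- `A` and `B` supply the edges missing from the two pairs.
lemma hasCompleteMinor_of_two_contacts (hp : IsPairing G (G.neighborFinset v) p) (hr : G.Adj v r)
    (hrp : ∀ i s, G.Adj r (p i s)) {A B : Set V} (hA : (G.induce A).Connected)
    (hB : (G.induce B).Connected) (hAB : Disjoint A B)
    (hM : ∀ z ∈ A ∪ B, z ∈ Gᶜ.neighborFinset v) (hcontactA : ∀ s, ∃ a ∈ A, G.Adj (p 0 s) a)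
    (hcontactB : ∀ s, ∃ b ∈ B, G.Adj (p 1 s) b) : G.HasCompleteMinor 6 := by
  have hv : ∀ i s, G.Adj v (p i s) := by simpa using hp.mem
  have hout : v ∉ A ∪ B ∧ ∀ z, G.Adj v z → z ∉ A ∪ B :=
    ⟨fun h => by simpa using hM v h, fun z hz h => by simpa [hz] using hM z h⟩
  simp only [Set.mem_union, not_or] at hout
  refine hasCompleteMinor_of_pairwise (L := [{v}, {r}, insert (p 0 true) A, {p 0 false},
    insert (p 1 true) B, {p 1 false}]) ?_ ?_
  · simp only [List.forall_mem_cons, List.not_mem_nil, false_imp_iff, implies_true, and_true]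
    exact ⟨connected_induce_singleton _, connected_induce_singleton _,
      connected_induce_insert hA (hcontactA true), connected_induce_singleton _,
      connected_induce_insert hB (hcontactB true), connected_induce_singleton _⟩
  · have hA' : ∃ a ∈ A, G.Adj a (p 0 false) := by simpa only [G.adj_comm] using hcontactA false
    have hB' : ∃ b ∈ B, G.Adj b (p 1 false) := by simpa only [G.adj_comm] using hcontactB false
    simp [hout, hr, hr.ne, hv, (hv _ _).ne, hrp, (hrp _ _).ne, hp.injective.eq_iff, hA', hB', hAB,
      hp.adj_of_ne]

lemma hasCompleteMinor_of_isClique_compl (hp : IsPairing G (G.neighborFinset v) p)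
    (hr : G.Adj v r) (hrp : ∀ i s, G.Adj r (p i s)) (hclique : G.IsClique (Gᶜ.neighborFinset v))
    (hM : ∀ i s, 1 < #(G.neighborFinset (p i s) ∩ Gᶜ.neighborFinset v)) :
    G.HasCompleteMinor 6 := by
  obtain ⟨A, hA, ⟨a, ha⟩, ⟨b, hb⟩, ⟨c, hc⟩, ⟨d, hd⟩⟩ := exists_subset_union_inter_nonempty
    (hM 0 true) (hM 0 false) (hM 1 true) (hM 1 false)
  have hAM : A ⊆ Gᶜ.neighborFinset v :=
    hA.trans (union_subset inter_subset_right inter_subset_right)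
  simp only [mem_inter, mem_sdiff, mem_neighborFinset] at ha hb hc hd
  have hconn : ∀ {S : Finset V} {z : V}, S ⊆ Gᶜ.neighborFinset v → z ∈ S →
      (G.induce (S : Set V)).Connected := fun hS hz =>
    connected_induce_of_isClique (hclique.subset hS) ⟨_, hz⟩
  have hcB : c ∈ Gᶜ.neighborFinset v \ A := by simp [hc]
  have hdB : d ∈ Gᶜ.neighborFinset v \ A := by simp [hd]
  refine hasCompleteMinor_of_two_contacts hp hr hrp (hconn hAM ha.2) (hconn sdiff_subset hcB)
    (disjoint_coe.2 disjoint_sdiff) ?_ ?_ ?_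
  · rw [← coe_union, union_sdiff_of_subset hAM]
    exact fun z hz => hz
  · exact Bool.rec ⟨b, hb.2, hb.1.1⟩ ⟨a, ha.2, ha.1.1⟩
  · exact Bool.rec ⟨d, hdB, hd.1.1⟩ ⟨c, hcB, hc.1.1⟩

lemma isClique_compl_and_lt_card_inter (hcard : Fintype.card V = 10) (hedges : #G.edgeFinset = 30)
    (hv : G.degree v = 5) (hsum : ∑ u ∈ G.neighborFinset v, max (G.degree u) 6 ≤ 32)
    (hcodegree : ∀ u, G.Adj v u → 3 ≤ codegree G u v) (hr : G.Adj v r)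
    (hr' : 4 ≤ codegree G r v) :
    G.IsClique (Gᶜ.neighborFinset v) ∧
      ∀ u, G.Adj v u → u ≠ r → 1 < #(G.neighborFinset u ∩ Gᶜ.neighborFinset v) := by
  have hM : #(Gᶜ.neighborFinset v) = 4 := by
    have := degree_add_card_compl (G := G) v
    lia
  have hle : ∀ u ∈ G.neighborFinset v, G.degree u ≤ max (G.degree u) 6 := fun u _ => le_max_left ..
  have hsum_le := sum_le_sum hle
  have hℓ : ∑ u ∈ G.neighborFinset v, (3 + if u = r then 1 else 0) = 16 := by
    simp [sum_add_distrib, hr, hv]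
  obtain ⟨hclique, heq⟩ := isClique_compl_and_codegree_eq
    (v := v) (ℓ := fun u => 3 + if u = r then 1 else 0)
    (fun u hu => by split_ifs with h; exacts [h ▸ hr', hcodegree u hu]) (by rw [hM, hℓ]; lia)
  refine ⟨hclique, fun u hu hur => ?_⟩
  have hcount := two_mul_sum_degree_add_sum_card_compl (G := G) v
  have hX := sum_card_neighborFinset_inter_le (G := G) (Gᶜ.neighborFinset v)
  rw [sum_congr rfl fun u hu => heq u (by simpa using hu), hℓ, hedges] at hcount
  rw [hM] at hX
  have hdeg := (sum_eq_sum_iff_of_le hle).1 (by lia) u (by simpa using hu)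
  have hinter := codegree_add_card_inter_compl (G := G) u v
  rw [heq u hu, if_neg hur, if_pos hu.symm] at hinter
  lia

lemma hasCompleteMinor_of_sum_max_degree_le (hcard : Fintype.card V = 10)
    (hedges : #G.edgeFinset = 30) (hv : G.degree v = 5)
    (hsum : ∑ u ∈ G.neighborFinset v, max (G.degree u) 6 ≤ 32) : G.HasCompleteMinor 6 := by
  by_cases hcodegree : ∃ u, G.Adj v u ∧ codegree G u v ≤ 2
  · obtain ⟨u, hu, hle⟩ := hcodegree
    exact hasCompleteMinor_of_codegree_le hu.symm (by lia) (by lia) (by lia)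
  push Not at hcodegree
  obtain ⟨p, hp⟩ := exists_isPairing_neighborFinset (G := G) (v := v) (k := 2)
    (fun u hu => by have := hcodegree u hu; lia) (by lia)
  obtain ⟨r, hr, hrp⟩ := hp.exists_mem_forall_adj (by simp [hv])
  rw [mem_neighborFinset] at hr
  have hr' : 4 ≤ codegree G r v := by
    have hcard : #(univ.image (Function.uncurry p)) = 4 := by
      rw [card_image_of_injective _ hp.injective.uncurry]
      simp
    rw [← hcard]
    refine card_le_card ?_
    simpa [image_subset_iff, hrp] using hp.mem
  obtain ⟨hclique, hM⟩ :=
    isClique_compl_and_lt_card_inter hcard hedges hv hsum hcodegree hr hr'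
  exact hasCompleteMinor_of_isClique_compl hp hr hrp hclique fun i s =>
    hM _ (by simpa using hp.mem i s) (hrp i s).ne'

end DegreeFive

section Eleven

variable {V : Type*} [Fintype V] {G : SimpleGraph V}

-- Contracting `x y` leaves `c` with degree `5` among vertices of degree close to `6`.
lemma hasCompleteMinor_of_degree_le_add {x y c : V} {f : V → ℕ} (hcard : Fintype.card V = 11)
    (hxy : G.Adj x y) (hedges : #G.edgeFinset = codegree G x y + 31)
    (hc : G.Adj x c ∧ G.Adj y c) (hdegc : G.degree c = 6)
    (hxy' : G.degree x + G.degree y ≤ codegree G x y + 8 + f x)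
    (hdeg : ∀ w, G.Adj c w → w ≠ x → G.degree w ≤ 6 + f w) (hf : ∑ w, f w ≤ 2) :
    G.HasCompleteMinor 6 := by
  have hedges' := card_edgeFinset_contract hxy
  have hcard' := card_subtype_ne_add_one y
  have hc' : (contract hxy).degree ⟨c, hc.2.ne'⟩ = 5 := by
    have := degree_contract_of_ne hxy (z := ⟨c, hc.2.ne'⟩) hc.1.ne'
    rw [if_pos hc] at this
    lia
  refine (isMinor_contract hxy).hasCompleteMinor
    (hasCompleteMinor_of_sum_max_degree_le (v := ⟨c, hc.2.ne'⟩) (by lia) (by lia) hc' ?_)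
  have hmax : ∀ w ∈ (contract hxy).neighborFinset ⟨c, hc.2.ne'⟩,
      max ((contract hxy).degree w) 6 ≤ 6 + f w := by
    intro w hw
    refine max_le ?_ (Nat.le_add_right ..)
    by_cases hwx : w = ⟨x, hxy.ne⟩
    · have := degree_contract_self hxy
      rw [hwx]
      lia
    · have hwx : (w : V) ≠ x := fun h => hwx (Subtype.ext h)
      have hcw : G.Adj c w := by
        simpa [hc.1.ne', hwx] using ((contract_adj hxy).1 ((mem_neighborFinset ..).1 hw)).2
      have := degree_contract_of_ne hxy hwx
      have := hdeg w hcw hwx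
      lia
  have hsum : ∑ w ∈ (contract hxy).neighborFinset ⟨c, hc.2.ne'⟩, f w ≤ 2 :=
    calc ∑ w ∈ (contract hxy).neighborFinset ⟨c, hc.2.ne'⟩, f w
        = ∑ w ∈ ((contract hxy).neighborFinset ⟨c, hc.2.ne'⟩).map (.subtype _), f w :=
          (sum_map _ (.subtype _) f).symm
      _ ≤ ∑ w, f w := sum_le_sum_of_subset (subset_univ _)
      _ ≤ 2 := hf
  refine (sum_le_sum hmax).trans ?_
  rw [sum_add_distrib, sum_const, card_neighborFinset_eq_degree, hc', smul_eq_mul]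
  lia

lemma hasCompleteMinor_of_isRegularOfDegree_eleven (hcard : Fintype.card V = 11)
    (hd : G.IsRegularOfDegree 6) : G.HasCompleteMinor 6 := by
  have hedges := G.sum_degrees_eq_twice_card_edges
  simp only [hd.degree_eq, sum_const, card_univ, hcard, smul_eq_mul] at hedges
  obtain ⟨x, y, hxy, hle⟩ := exists_codegree_le_two hcard hd
  by_cases hcodegree : codegree G x y ≤ 1
  · exact hasCompleteMinor_of_codegree_le hxy (by lia) (by lia) (by lia)
  obtain ⟨c, hc⟩ := card_pos.1 (show 0 < codegree G x y by lia)
  simp only [mem_inter, mem_neighborFinset] at hc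
  refine hasCompleteMinor_of_degree_le_add (f := fun w => if w = x then 2 else 0) hcard hxy
    (by lia) hc (hd c) ?_ (fun w _ _ => ?_) (by simp)
  · rw [hd.degree_eq, hd.degree_eq, if_pos rfl]
    lia
  · rw [hd.degree_eq]
    lia

lemma isClique_compl_of_seven_le_degree (hcard : Fintype.card V = 11) (hedges : #G.edgeFinset = 34)
    (hdeg : ∀ u, 6 ≤ G.degree u) (hcodegree : ∀ u v, G.Adj u v → 3 ≤ codegree G u v) {a v : V}
    (ha : 7 ≤ G.degree a) (hv : G.degree v = 6) (hva : Gᶜ.Adj v a) :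
    G.degree a = 7 ∧ G.IsClique (Gᶜ.neighborFinset v) ∧
      ∀ u, G.Adj v u → codegree G u v = 3 := by
  have hM : #(Gᶜ.neighborFinset v) = 4 := by
    have := degree_add_card_compl (G := G) v
    lia
  have hsum := sum_degree_add_mul_card_le hdeg (insert a (G.neighborFinset v))
  have haN : a ∉ G.neighborFinset v := by simpa using hva.2
  rw [sum_insert haN, card_insert_of_notMem haN, card_neighborFinset_eq_degree, hv] at hsum
  have hconst : ∑ u ∈ G.neighborFinset v, 3 = 18 := by simp [hv]
  obtain ⟨hclique, heq⟩ := isClique_compl_and_codegree_eq (v := v) (ℓ := fun _ => 3)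
    (fun u hu => hcodegree u v hu.symm) (by rw [hM, hconst]; lia)
  refine ⟨?_, hclique, heq⟩
  have hcount := two_mul_sum_degree_add_sum_card_compl (G := G) v
  have hX := sum_card_neighborFinset_inter_le (G := G) (Gᶜ.neighborFinset v)
  rw [sum_congr rfl fun u hu => heq u (by simpa using hu), hconst] at hcount
  rw [hM] at hX
  lia

lemma degree_le_seven (hcard : Fintype.card V = 11) (hedges : #G.edgeFinset = 34)
    (hdeg : ∀ u, 6 ≤ G.degree u) (hcodegree : ∀ u v, G.Adj u v → 3 ≤ codegree G u v) (a : V) :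
    G.degree a ≤ 7 := by
  by_contra! ha
  have hsum := sum_degree_add_mul_card_le hdeg
  have hlarge := hsum {a}
  rw [sum_singleton, card_singleton] at hlarge
  have hM := degree_add_card_compl (G := G) a
  obtain ⟨v, hv⟩ := card_pos.1 (show 0 < #(Gᶜ.neighborFinset a) by lia)
  rw [mem_neighborFinset] at hv
  have hpair := hsum {a, v}
  rw [sum_pair hv.ne, card_pair hv.ne] at hpair
  have := hdeg v
  have := isClique_compl_of_seven_le_degree hcard hedges hdeg hcodegree ha.le (by lia) hv.symm
  lia

lemma exists_two_degree_eq_seven (hcard : Fintype.card V = 11) (hedges : #G.edgeFinset = 34)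
    (hdeg : ∀ u, 6 ≤ G.degree u) (hdeg' : ∀ u, G.degree u ≤ 7) :
    ∃ a b, a ≠ b ∧ ∀ u, G.degree u = if u = a ∨ u = b then 7 else 6 := by
  have heq : ∀ u, G.degree u = 6 + if G.degree u = 7 then 1 else 0 := fun u => by
    have := hdeg u
    have := hdeg' u
    split_ifs <;> lia
  have hsum := G.sum_degrees_eq_twice_card_edges
  rw [sum_congr rfl fun u _ => heq u, sum_add_distrib, sum_const, card_univ, hcard, hedges,
    ← card_filter] at hsum
  obtain ⟨a, b, hab, hset⟩ := card_eq_two.1 (show #{u | G.degree u = 7} = 2 by lia)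
  refine ⟨a, b, hab, fun u => ?_⟩
  have hu : G.degree u = 7 ↔ u = a ∨ u = b := by simpa using congrArg (u ∈ ·) hset
  have := heq u
  split_ifs at this ⊢ <;> grind

lemma degree_deleteEdges_add_one {u v : V} (h : G.Adj u v) :
    (G.deleteEdges {s(u, v)}).degree u + 1 = G.degree u := by
  have hN : (G.deleteEdges {s(u, v)}).neighborFinset u = (G.neighborFinset u).erase v := by
    ext w
    have : s(u, w) = s(u, v) ↔ w = v := Sym2.congr_right
    simp only [mem_neighborFinset, deleteEdges_adj, Set.mem_singleton_iff, mem_erase, this,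
      and_comm]
  rw [← card_neighborFinset_eq_degree, hN, card_erase_add_one (by simpa),
    card_neighborFinset_eq_degree]

lemma degree_deleteEdges_of_notMem {u : V} {e : Sym2 V} (h : u ∉ e) :
    (G.deleteEdges {e}).degree u = G.degree u := by
  have hN : (G.deleteEdges {e}).neighborFinset u = G.neighborFinset u := by
    ext w
    have : s(u, w) ≠ e := fun he => h (he ▸ Sym2.mem_mk_left u w)
    simp [this]
  rw [← card_neighborFinset_eq_degree, hN, card_neighborFinset_eq_degree]

lemma hasCompleteMinor_of_adj_of_degree_eq_ite (hcard : Fintype.card V = 11) {a b : V}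
    (hab : G.Adj a b) (hdeg : ∀ u, G.degree u = if u = a ∨ u = b then 7 else 6) :
    G.HasCompleteMinor 6 := by
  have hd : (G.deleteEdges {s(a, b)}).IsRegularOfDegree 6 := by
    intro u
    by_cases hua : u = a
    · have := degree_deleteEdges_add_one hab
      rw [hdeg, if_pos (.inl rfl)] at this
      rw [hua]
      lia
    by_cases hub : u = b
    · have := degree_deleteEdges_add_one hab.symm
      rw [Sym2.eq_swap, hdeg, if_pos (.inr rfl)] at this
      rw [hub]
      lia
    rw [degree_deleteEdges_of_notMem (by simp [hua, hub]), hdeg, if_neg (by simp [hua, hub])]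
  exact (isMinor_of_injective (.ofLE (G.deleteEdges_le {s(a, b)}))
    Function.injective_id).hasCompleteMinor
      (hasCompleteMinor_of_isRegularOfDegree_eleven hcard (by convert hd))

lemma exists_nonneighbors_adj (hcard : Fintype.card V = 11) (hedges : #G.edgeFinset = 34)
    (hcodegree : ∀ u v, G.Adj u v → 3 ≤ codegree G u v) {a b : V} (hab : ¬G.Adj a b) (hne : a ≠ b)
    (hdeg : ∀ u, G.degree u = if u = a ∨ u = b then 7 else 6) :
    ∃ p q, G.Adj p q ∧ ¬G.Adj a p ∧ ¬G.Adj a q ∧ G.degree p = 6 ∧ G.degree q = 6 ∧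
      ∀ u, G.Adj p u → codegree G u p = 3 := by
  have hM := degree_add_card_compl (G := G) a
  obtain ⟨p, hp, q, hq, hpq⟩ := one_lt_card.1
    (show 1 < #((Gᶜ.neighborFinset a).erase b) by
      rw [card_erase_of_mem (by simpa using ⟨hne, hab⟩)]
      rw [hdeg, if_pos (.inl rfl)] at hM
      lia)
  simp only [mem_erase, mem_neighborFinset] at hp hq
  have hdegp : G.degree p = 6 := by simp [hdeg, hp.1, hp.2.ne']
  have hdegq : G.degree q = 6 := by simp [hdeg, hq.1, hq.2.ne']
  obtain ⟨-, hclique, hcodegree⟩ := isClique_compl_of_seven_le_degree hcard hedges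
    (fun u => by rw [hdeg]; split_ifs <;> lia) hcodegree (by simp [hdeg]) hdegp hp.2.symm
  refine ⟨p, q, not_not.1 fun h => hq.2.2 (hclique ?_ ?_ hq.2.ne), hp.2.2, hq.2.2, hdegp, hdegq,
    hcodegree⟩
  · simpa using hp.2.symm
  · simpa using ⟨hpq, h⟩

lemma hasCompleteMinor_of_not_adj_of_degree_eq_ite (hcard : Fintype.card V = 11)
    (hedges : #G.edgeFinset = 34) (hcodegree : ∀ u v, G.Adj u v → 3 ≤ codegree G u v) {a b : V}
    (hab : ¬G.Adj a b) (hne : a ≠ b) (hdeg : ∀ u, G.degree u = if u = a ∨ u = b then 7 else 6) :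
    G.HasCompleteMinor 6 := by
  obtain ⟨p, q, hpq, hap, haq, hp, hq, heq⟩ :=
    exists_nonneighbors_adj hcard hedges hcodegree hab hne hdeg
  obtain ⟨u, hu, hub⟩ := exists_mem_ne (Nat.lt_of_succ_lt (hcodegree p q hpq)) b
  simp only [mem_inter, mem_neighborFinset] at hu
  have hua : u ≠ a := by
    rintro rfl
    exact hap hu.1.symm
  have hdegu : G.degree u = 6 := by simp [hdeg, hua, hub]
  have hcodegree := heq u hu.1
  rw [codegree_comm] at hcodegree
  refine hasCompleteMinor_of_degree_le_add
    (f := fun w => (if w = p then 1 else 0) + if w = b then 1 else 0) hcard hu.1 (by lia)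
      ⟨hpq, hu.2.symm⟩ hq ?_ (fun w hqw _ => ?_) (by simp [sum_add_distrib])
  · rw [if_pos rfl]
    lia
  · have hwa : w ≠ a := fun h => haq (h ▸ hqw.symm)
    simp only [hdeg, hwa, false_or]
    split_ifs <;> lia

lemma hasCompleteMinor_of_card_edgeFinset_eq (hcard : Fintype.card V = 11)
    (hedges : #G.edgeFinset = 34) (hdeg : ∀ u, 6 ≤ G.degree u) : G.HasCompleteMinor 6 := by
  by_cases hcodegree : ∃ u v, G.Adj u v ∧ codegree G u v ≤ 2
  · obtain ⟨u, v, huv, hle⟩ := hcodegree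
    exact hasCompleteMinor_of_codegree_le huv (by lia) (by lia) (by lia)
  push Not at hcodegree
  obtain ⟨a, b, hne, hdeg⟩ := exists_two_degree_eq_seven hcard hedges hdeg
    (degree_le_seven hcard hedges hdeg hcodegree)
  by_cases hab : G.Adj a b
  · exact hasCompleteMinor_of_adj_of_degree_eq_ite hcard hab hdeg
  · exact hasCompleteMinor_of_not_adj_of_degree_eq_ite hcard hedges hcodegree hab hne hdeg

end Eleven

end K6Minor

theorem order_le_11_minDegree6_hasK6Minor {V : Type*} [Fintype V] (G : SimpleGraph V)
    (hcard : Fintype.card V ≤ 11) (hdeg : 6 ≤ G.minDegree) :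
    G.HasCompleteMinor 6 := by
  obtain ⟨v⟩ : Nonempty V := not_isEmpty_iff.1 fun _ => by simp at hdeg
  have hdeg : ∀ v, 6 ≤ G.degree v := fun v => hdeg.trans (G.minDegree_le_degree v)
  have hsum : 6 * Fintype.card V ≤ 2 * G.edgeFinset.card := by
    simpa using K6Minor.sum_degree_add_mul_card_le hdeg ∅
  have hlower : 7 ≤ Fintype.card V := by
    have := G.degree_lt_card_verts v
    have := hdeg v
    lia
  by_cases hMader : 4 * Fintype.card V ≤ G.edgeFinset.card + 9
  · exact K6Minor.hasCompleteMinor_of_four_mul_card_le (by lia) hcard hMader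
  by_cases hreg : 2 * G.edgeFinset.card ≤ 6 * Fintype.card V
  · have hreg := K6Minor.isRegularOfDegree_of_card_edgeFinset_le hdeg hreg
    obtain h | h : Fintype.card V = 10 ∨ Fintype.card V = 11 := by lia
    · exact K6Minor.hasCompleteMinor_of_isRegularOfDegree_ten h hreg
    · exact K6Minor.hasCompleteMinor_of_isRegularOfDegree_eleven h hreg
  · exact K6Minor.hasCompleteMinor_of_card_edgeFinset_eq (by lia) (by lia) hdeg
end
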